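/- Let K and L be infinite countable compact Hausdorff spaces. The following are equivalent: (i) there exists a positive isomorphism from C(K) onto C(L); (ii) C(K) is linearly isomorphic to C(L) and ht(K) ≤ ht(L); (iii) ht(K) ≤ ht(L) < Γ(ht(K)), where Γ(α) denotes the least ordinal of the form ω^β that is greater than or equal to α. -/

import Mathlib

open Ordinal Set

/-- The Cantor–Bendixson derivative of order `o`. -/
noncomputable def cbDeriv (X : Type*) [TopologicalSpace X] : Ordinal.{0} → Set X :=
  fun o => Ordinal.limitRecOn o Set.univ
    (fun _ ih => derivedSet ih)
    (fun o _ ih => ⋂ (β : Ordinal) (h : β < o), ih β h)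

/-- The Cantor–Bendixson height: the least ordinal whose derivative is empty. -/
noncomputable def cbHeight (X : Type*) [TopologicalSpace X] : Ordinal.{0} :=
  sInf {o : Ordinal | cbDeriv X o = ∅}

/-- `Γ(a)`: the least ordinal of the form `ω ^ β` that is `≥ a`. -/
noncomputable def GammaOrd (a : Ordinal.{0}) : Ordinal.{0} :=
  sInf {x : Ordinal | (∃ β : Ordinal, x = ω ^ β) ∧ a ≤ x}

open Topology Filter

section CBBasics

theorem cb_zero (X : Type*) [TopologicalSpace X] : cbDeriv X 0 = Set.univ := by
  simp [cbDeriv]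

theorem cb_succ (X : Type*) [TopologicalSpace X] (o : Ordinal.{0}) :
    cbDeriv X (o + 1) = derivedSet (cbDeriv X o) := by
  simp only [cbDeriv]
  rw [Ordinal.limitRecOn_add_one]

theorem cb_limit (X : Type*) [TopologicalSpace X] {o : Ordinal.{0}} (ho : Order.IsSuccLimit o) :
    cbDeriv X o = ⋂ (β : Ordinal) (_ : β < o), cbDeriv X β := by
  simp only [cbDeriv]
  rw [Ordinal.limitRecOn_limit _ _ _ _ ho]

theorem mem_cb_limit {X : Type*} [TopologicalSpace X] {o : Ordinal.{0}} (ho : Order.IsSuccLimit o)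
    {x : X} : x ∈ cbDeriv X o ↔ ∀ β < o, x ∈ cbDeriv X β := by
  rw [cb_limit X ho]; simp

theorem ord_ind {P : Ordinal.{0} → Prop} (o : Ordinal.{0}) (h0 : P 0)
    (h1 : ∀ o, P o → P (o + 1)) (h2 : ∀ o, Order.IsSuccLimit o → (∀ b < o, P b) → P o) : P o := by
  induction o using Ordinal.limitRecOn with
  | zero => exact h0
  | add_one o ih => exact h1 o ih
  | limit o ho ih => exact h2 o ho ih

theorem cb_closed (X : Type*) [TopologicalSpace X] [T1Space X] (o : Ordinal.{0}) :
    IsClosed (cbDeriv X o) := by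
  induction o using ord_ind with
  | h0 => rw [cb_zero]; exact isClosed_univ
  | h1 o ih => rw [cb_succ]; exact isClosed_derivedSet _
  | h2 o ho ih =>
    rw [cb_limit X ho]
    exact isClosed_iInter fun b => isClosed_iInter fun hb => ih b hb

theorem cb_succ_sub (X : Type*) [TopologicalSpace X] [T1Space X] (o : Ordinal.{0}) :
    cbDeriv X (o + 1) ⊆ cbDeriv X o := by
  rw [cb_succ]
  exact (isClosed_iff_derivedSet_subset _).1 (cb_closed X o)

theorem cb_anti (X : Type*) [TopologicalSpace X] [T1Space X] {a b : Ordinal.{0}} (h : a ≤ b) :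
    cbDeriv X b ⊆ cbDeriv X a := by
  induction b using ord_ind with
  | h0 => simp at h; rw [h]
  | h1 o ih =>
    rcases h.lt_or_eq with h | h
    · exact (cb_succ_sub X o).trans (ih (Order.lt_add_one_iff.1 h))
    · rw [h]
  | h2 o ho ih =>
    rcases h.lt_or_eq with h | h
    · intro x hx; exact (mem_cb_limit ho).1 hx a h
    · rw [h]

theorem cb_openEmb {U X : Type*} [TopologicalSpace U] [TopologicalSpace X] {j : U → X}
    (hj : IsOpenEmbedding j) (o : Ordinal.{0}) (u : U) :
    u ∈ cbDeriv U o ↔ j u ∈ cbDeriv X o := by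
  induction o using ord_ind generalizing u with
  | h0 => simp [cb_zero]
  | h1 o ih =>
    rw [cb_succ, cb_succ, mem_derivedSet, mem_derivedSet, accPt_iff_nhds, accPt_iff_nhds]
    constructor
    · intro h V hV
      obtain ⟨y, ⟨hy1, hy2⟩, hy3⟩ := h (j ⁻¹' V) (hj.continuous.continuousAt hV)
      exact ⟨j y, ⟨hy1, (ih y).1 hy2⟩, fun e => hy3 (hj.injective e)⟩
    · intro h V hV
      obtain ⟨y, ⟨⟨z, hz, rfl⟩, hy2⟩, hy3⟩ := h (j '' V) (hj.isOpenMap.image_mem_nhds hV)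
      exact ⟨z, ⟨hz, (ih z).2 hy2⟩, fun e => hy3 (by rw [e])⟩
  | h2 o ho ih =>
    rw [mem_cb_limit ho, mem_cb_limit ho]
    exact forall₂_congr fun b hb => ih b hb u

theorem cb_sub {X : Type*} [TopologicalSpace X] [T1Space X] {a : Ordinal.{0}} (o : Ordinal.{0})
    (u : cbDeriv X a) : u ∈ cbDeriv (cbDeriv X a) o ↔ (u : X) ∈ cbDeriv X (a + o) := by
  induction o using ord_ind generalizing u with
  | h0 => simp [cb_zero]
  | h1 o ih =>
    rw [← add_assoc, cb_succ, cb_succ, mem_derivedSet, mem_derivedSet, accPt_iff_nhds,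
      accPt_iff_nhds]
    constructor
    · intro h V hV
      obtain ⟨y, ⟨hy1, hy2⟩, hy3⟩ := h (Subtype.val ⁻¹' V)
        (continuous_subtype_val.continuousAt hV)
      exact ⟨y, ⟨hy1, (ih y).1 hy2⟩, fun e => hy3 (Subtype.ext e)⟩
    · intro h V hV
      rw [mem_nhds_subtype] at hV
      obtain ⟨W, hW, hWV⟩ := hV
      obtain ⟨y, ⟨hy1, hy2⟩, hy3⟩ := h W hW
      exact ⟨⟨y, cb_anti X le_self_add hy2⟩, ⟨hWV hy1, (ih _).2 hy2⟩,
        fun e => hy3 (by rw [← e])⟩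
  | h2 o ho ih =>
    rw [mem_cb_limit ho, mem_cb_limit (Ordinal.isSuccLimit_add a ho)]
    constructor
    · intro h b hb
      rcases le_total b a with hba | hab
      · exact cb_anti X hba u.2
      · obtain ⟨c, rfl⟩ := exists_add_of_le hab
        have hc : c < o := (add_lt_add_iff_left a).1 hb
        exact (ih c hc u).1 (h c hc)
    · intro h b hb
      exact (ih b hb u).2 (h _ ((add_lt_add_iff_left a).2 hb))

end CBBasics

section Scattered

variable {X : Type*} [TopologicalSpace X] [CompactSpace X] [T2Space X] [Countable X]

theorem exists_isolated (C : Set X) (hC : IsClosed C) (hne : C.Nonempty) :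
    ∃ y ∈ C, y ∉ derivedSet C := by
  have : CompactSpace C := isCompact_iff_compactSpace.1 hC.isCompact
  have : Nonempty C := hne.to_subtype
  obtain ⟨x, hx⟩ := nonempty_interior_of_iUnion_of_closed (X := C) (f := fun x : C => {x})
    (fun _ => isClosed_singleton) (by ext; simp)
  obtain ⟨y, hy⟩ := hx
  have hyx : y = x := Set.mem_singleton_iff.1 (interior_subset hy)
  subst hyx
  refine ⟨y, y.2, ?_⟩
  rw [mem_derivedSet, accPt_iff_nhds]
  push Not
  have := mem_interior_iff_mem_nhds.1 hy
  rw [mem_nhds_subtype] at this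
  obtain ⟨W, hW, hWV⟩ := this
  refine ⟨W, hW, ?_⟩
  rintro z ⟨hz1, hz2⟩
  have := @hWV ⟨z, hz2⟩ hz1
  simpa using congrArg Subtype.val this

theorem countable_td : TotallyDisconnectedSpace X := by
  refine ⟨fun t _ ht => ?_⟩
  intro x hx y hy
  by_contra hne
  obtain ⟨f, hf0, hf1, hf⟩ := exists_continuous_zero_one_of_isClosed
    (isClosed_singleton (x := x)) (isClosed_singleton (x := y)) (by simpa using hne)
  have h1 : IsPreconnected (f '' t) := ht.image f f.continuous.continuousOn
  have h2 : (f '' t).Countable := (Set.to_countable t).image f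
  have h3 := h2.isTotallyDisconnected _ subset_rfl h1
  have := h3 (Set.mem_image_of_mem f hx) (Set.mem_image_of_mem f hy)
  rw [hf0 rfl, hf1 rfl] at this
  simp at this

theorem clopen_nhd {x : X} {U : Set X} (hU : U ∈ 𝓝 x) : ∃ V, IsClopen V ∧ x ∈ V ∧ V ⊆ U := by
  have : TotallyDisconnectedSpace X := countable_td
  obtain ⟨W, hWU, hW, hx⟩ := mem_nhds_iff.1 hU
  obtain ⟨V, hV, hxV, hVW⟩ := compact_exists_isClopen_in_isOpen hW hx
  exact ⟨V, hV, hxV, hVW.trans hWU⟩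

theorem exists_rank_near {x : X} {o : Ordinal.{0}} (hx : x ∈ cbDeriv X o) {U : Set X}
    (hU : U ∈ 𝓝 x) : ∃ y ∈ U, y ∈ cbDeriv X o ∧ y ∉ cbDeriv X (o + 1) := by
  obtain ⟨V, hV, hxV, hVU⟩ := clopen_nhd hU
  obtain ⟨y, hy, hy'⟩ := exists_isolated (V ∩ cbDeriv X o) (hV.isClosed.inter (cb_closed X o))
    ⟨x, hxV, hx⟩
  refine ⟨y, hVU hy.1, hy.2, fun h => hy' ?_⟩
  rw [cb_succ, mem_derivedSet, accPt_iff_nhds] at h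
  rw [mem_derivedSet, accPt_iff_nhds]
  intro W hW
  obtain ⟨z, ⟨h1, h2⟩, h3⟩ := h (W ∩ V) (inter_mem hW (hV.isOpen.mem_nhds hy.1))
  exact ⟨z, ⟨h1.1, h1.2, h2⟩, h3⟩

variable (X) in
theorem exists_cb_empty : ∃ o : Ordinal.{0}, cbDeriv X o = ∅ := by
  by_contra! h
  have : ∀ o : Ordinal.{0}, ∃ x, x ∈ cbDeriv X o ∧ x ∉ cbDeriv X (o + 1) := by
    intro o
    obtain ⟨x, hx⟩ := h o
    obtain ⟨y, -, hy⟩ := exists_rank_near hx univ_mem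
    exact ⟨y, hy⟩
  choose f hf using this
  refine not_injective_of_ordinal.{0} f ?_
  have key : ∀ a b, a < b → f a ≠ f b := fun a b hab e =>
    (hf a).2 (e ▸ cb_anti X (Order.add_one_le_iff.2 hab) (hf b).1)
  intro a b e
  rcases lt_trichotomy a b with h | h | h
  · exact absurd e (key a b h)
  · exact h
  · exact absurd e.symm (key b a h)

theorem exists_rank (x : X) : ∃ o : Ordinal.{0}, x ∈ cbDeriv X o ∧ x ∉ cbDeriv X (o + 1) := by
  by_contra! h
  obtain ⟨o, ho⟩ := exists_cb_empty X
  have : ∀ o, x ∈ cbDeriv X o := by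
    intro o
    induction o using ord_ind with
    | h0 => simp [cb_zero]
    | h1 o ih => exact h o ih
    | h2 o ho ih => exact (mem_cb_limit ho).2 ih
  have := this o
  simp [ho] at this

theorem cb_limit_empty {o : Ordinal.{0}} (ho : Order.IsSuccLimit o) (h : cbDeriv X o = ∅) :
    ∃ b < o, cbDeriv X b = ∅ := by
  by_contra! hc
  have hpos : 0 < o := by
    rcases eq_or_ne o 0 with h0 | h0
    · subst h0; exact absurd ho (by simp)
    · exact pos_iff_ne_zero.2 h0
  have : Nonempty (Set.Iio o) := ⟨⟨0, hpos⟩⟩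
  have := IsCompact.nonempty_iInter_of_directed_nonempty_isCompact_isClosed
    (fun b : Set.Iio o => cbDeriv X b.1)
    (by
      intro a b
      refine ⟨max a b, cb_anti X ?_, cb_anti X ?_⟩
      · exact le_max_left a b
      · exact le_max_right a b)
    (fun b => hc b.1 b.2) (fun b => (cb_closed X _).isCompact) (fun b => cb_closed X _)
  obtain ⟨x, hx⟩ := this
  have : x ∈ cbDeriv X o := (mem_cb_limit ho).2 fun b hb => Set.mem_iInter.1 hx ⟨b, hb⟩
  simp [h] at this

theorem finite_of_derived_empty {S : Set X} (h : derivedSet S = ∅) : S.Finite := by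
  by_contra hS
  obtain ⟨x, hx⟩ := Set.Infinite.exists_accPt_principal hS
  have : x ∈ derivedSet S := hx
  simp [h] at this

theorem derived_empty_of_finite {S : Set X} (h : S.Finite) : derivedSet S = ∅ := by
  ext x
  simp only [Set.mem_empty_iff_false, iff_false]
  intro hx
  exact (Set.Infinite.of_accPt hx) h

theorem exists_top [Nonempty X] : ∃ a : Ordinal.{0}, (cbDeriv X a).Nonempty ∧ (cbDeriv X a).Finite ∧
    cbDeriv X (a + 1) = ∅ ∧ cbHeight X = a + 1 := by
  have hmem : cbDeriv X (cbHeight X) = ∅ := csInf_mem (exists_cb_empty X)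
  have hmin : ∀ b, b < cbHeight X → (cbDeriv X b).Nonempty := by
    intro b hb
    rw [Set.nonempty_iff_ne_empty]
    exact fun h => notMem_of_lt_csInf' hb h
  generalize cbHeight X = o at *
  rcases Ordinal.zero_or_succ_or_isSuccLimit o with h | ⟨a, h⟩ | h
  · subst h; simp [cb_zero] at hmem
  · have ho : o = a + 1 := by rw [← h]; rfl
    subst ho
    refine ⟨a, hmin a (Order.lt_add_one_iff.2 le_rfl), ?_, hmem, rfl⟩
    exact finite_of_derived_empty (by rw [← cb_succ]; exact hmem)
  · obtain ⟨b, hb, hb'⟩ := cb_limit_empty h hmem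
    exact absurd hb' (hmin b hb).ne_empty

end Scattered

section HomeoSec

theorem isolate {X : Type*} [TopologicalSpace X] [CompactSpace X] [T2Space X] [Countable X]
    {x : X} {r : Ordinal.{0}} (h1 : x ∈ cbDeriv X r) (h2 : x ∉ cbDeriv X (r + 1)) {N : Set X}
    (hN : N ∈ 𝓝 x) : ∃ A, IsClopen A ∧ x ∈ A ∧ A ⊆ N ∧ A ∩ cbDeriv X r = {x} := by
  rw [cb_succ, mem_derivedSet, accPt_iff_nhds] at h2
  push Not at h2
  obtain ⟨U, hU, hUx⟩ := h2
  obtain ⟨A, hA, hxA, hAU⟩ := clopen_nhd (inter_mem hU hN)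
  refine ⟨A, hA, hxA, fun z hz => (hAU hz).2, ?_⟩
  ext z
  constructor
  · rintro ⟨hz1, hz2⟩
    exact hUx z ⟨(hAU hz1).1, hz2⟩
  · rintro rfl
    exact ⟨hxA, h1⟩

theorem homeo_of_rel {X Y : Type*} [TopologicalSpace X] [CompactSpace X]
    [TopologicalSpace Y] [CompactSpace Y] [T2Space Y] (R : Set (X × Y)) (hR : IsClosed R)
    (h1 : ∀ x, ∃ y, (x, y) ∈ R) (h2 : ∀ y, ∃ x, (x, y) ∈ R)
    (h3 : ∀ x y y', (x, y) ∈ R → (x, y') ∈ R → y = y')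
    (h4 : ∀ x x' y, (x, y) ∈ R → (x', y) ∈ R → x = x') : Nonempty (X ≃ₜ Y) := by
  choose f hf using h1
  choose g hg using h2
  have hc : Continuous f := by
    rw [continuous_iff_isClosed]
    intro F hF
    have : f ⁻¹' F = Prod.fst '' (R ∩ Prod.snd ⁻¹' F) := by
      ext x
      constructor
      · intro hx
        exact ⟨(x, f x), ⟨hf x, hx⟩, rfl⟩
      · rintro ⟨⟨a, b⟩, ⟨hab, hb⟩, rfl⟩
        have : f a = b := h3 _ _ _ (hf a) hab
        change f a ∈ F
        rw [this]; exact hb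
    rw [this]
    exact isClosedMap_fst_of_compactSpace _ (hR.inter (hF.preimage continuous_snd))
  let e : X ≃ Y := ⟨f, g, fun x => h4 _ _ _ (hg (f x)) (hf x), fun y => h3 _ _ _ (hf (g y)) (hg y)⟩
  exact ⟨Continuous.homeoOfEquivCompactToT2 (f := e) hc⟩

structure GoodRel {X Y : Type*} [TopologicalSpace X] [TopologicalSpace Y] (s : X) (t : Y)
    (G : Set (X × Y)) : Prop where
  closed : IsClosed G
  fn : ∀ x y y', (x, y) ∈ G → (x, y') ∈ G → y = y'
  inj : ∀ x x' y, (x, y) ∈ G → (x', y) ∈ G → x = x'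
  openX : IsOpen (Prod.fst '' G)
  openY : IsOpen (Prod.snd '' G)
  sX : s ∉ Prod.fst '' G
  tY : t ∉ Prod.snd '' G

theorem GoodRel.swap {X Y : Type*} [TopologicalSpace X] [TopologicalSpace Y] {s : X} {t : Y}
    {G : Set (X × Y)} (h : GoodRel s t G) : GoodRel t s (Prod.swap ⁻¹' G) := by
  have e1 : Prod.fst '' (Prod.swap ⁻¹' G) = Prod.snd '' G := by
    ext z; simp
  have e2 : Prod.snd '' (Prod.swap ⁻¹' G) = Prod.fst '' G := by
    ext z; simp
  refine ⟨h.closed.preimage continuous_swap, fun x y y' h1 h2 => h.inj _ _ _ h1 h2,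
    fun x x' y h1 h2 => h.fn _ _ _ h1 h2, ?_, ?_, ?_, ?_⟩
  · rw [e1]; exact h.openY
  · rw [e2]; exact h.openX
  · rw [e1]; exact h.tY
  · rw [e2]; exact h.sX

theorem good_step {X Y : Type*} [TopologicalSpace X] [CompactSpace X] [T2Space X] [Countable X]
    [TopologicalSpace Y] [CompactSpace Y] [T2Space Y] [Countable Y] {a : Ordinal.{0}} {s : X} {t : Y}
    (hs : cbDeriv X a = {s}) (ht : cbDeriv Y a = {t})
    (hH : ∀ r < a, ∀ (A : Set X) (B : Set Y) (x : X) (y : Y), IsClopen A → IsClopen B →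
      A ∩ cbDeriv X r = {x} → B ∩ cbDeriv Y r = {y} → Nonempty (A ≃ₜ B))
    {G : Set (X × Y)} (hG : GoodRel s t G) (x : X) (hx : x ≠ s) :
    ∃ G', G ⊆ G' ∧ GoodRel s t G' ∧ x ∈ Prod.fst '' G' := by
  by_cases hxG : x ∈ Prod.fst '' G
  · exact ⟨G, subset_rfl, hG, hxG⟩
  obtain ⟨r, hr1, hr2⟩ := exists_rank x
  have hra : r < a := by
    by_contra h
    have : x ∈ cbDeriv X a := cb_anti X (not_lt.1 h) hr1
    rw [hs] at this
    exact hx this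
  have cX : IsClosed (Prod.fst '' G) := isClosedMap_fst_of_compactSpace _ hG.closed
  have cY : IsClosed (Prod.snd '' G) := isClosedMap_snd_of_compactSpace _ hG.closed
  obtain ⟨A, hA, hxA, hAN, hAr⟩ := isolate hr1 hr2
    (inter_mem (cX.isOpen_compl.mem_nhds hxG) (isOpen_compl_singleton.mem_nhds hx))
  have ht0 : t ∈ cbDeriv Y a := by rw [ht]; rfl
  have htr : t ∈ cbDeriv Y (r + 1) := cb_anti Y (Order.add_one_le_iff.2 hra) ht0
  obtain ⟨y, hyN, hy1, hy2⟩ := exists_rank_near (cb_succ_sub Y r htr)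
    (cY.isOpen_compl.mem_nhds hG.tY)
  have hyt : y ≠ t := by rintro rfl; exact hy2 htr
  obtain ⟨B, hB, hyB, hBN, hBr⟩ := isolate hy1 hy2
    (inter_mem (cY.isOpen_compl.mem_nhds hyN) (isOpen_compl_singleton.mem_nhds hyt))
  obtain ⟨e⟩ := hH r hra A B x y hA hB hAr hBr
  have : CompactSpace A := isCompact_iff_compactSpace.1 hA.isClosed.isCompact
  set E : Set (X × Y) := Set.range (fun z : A => ((z : X), (e z : Y))) with hE
  have hEc : IsClosed E := (isCompact_range (by fun_prop)).isClosed
  have f1 : Prod.fst '' E = A := by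
    ext z
    constructor
    · rintro ⟨_, ⟨w, rfl⟩, rfl⟩
      exact w.2
    · intro hz
      exact ⟨_, ⟨⟨z, hz⟩, rfl⟩, rfl⟩
  have f2 : Prod.snd '' E = B := by
    ext z
    constructor
    · rintro ⟨_, ⟨w, rfl⟩, rfl⟩
      exact (e w).2
    · intro hz
      exact ⟨_, ⟨e.symm ⟨z, hz⟩, rfl⟩, by simp⟩
  have mA : ∀ u v, (u, v) ∈ E → u ∈ A := fun u v h => by rw [← f1]; exact ⟨_, h, rfl⟩
  have mB : ∀ u v, (u, v) ∈ E → v ∈ B := fun u v h => by rw [← f2]; exact ⟨_, h, rfl⟩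
  have nA : ∀ u v, (u, v) ∈ G → u ∉ A := fun u v h h' => (hAN h').1 ⟨_, h, rfl⟩
  have nB : ∀ u v, (u, v) ∈ G → v ∉ B := fun u v h h' => (hBN h').1 ⟨_, h, rfl⟩
  refine ⟨G ∪ E, Set.subset_union_left, ⟨hG.closed.union hEc, ?_, ?_, ?_, ?_, ?_, ?_⟩, ?_⟩
  · rintro u v v' (h1 | h1) (h2 | h2)
    · exact hG.fn _ _ _ h1 h2
    · exact absurd (mA _ _ h2) (nA _ _ h1)
    · exact absurd (mA _ _ h1) (nA _ _ h2)
    · obtain ⟨w, hw⟩ := h1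
      obtain ⟨w', hw'⟩ := h2
      simp only [Prod.mk.injEq] at hw hw'
      have : w = w' := Subtype.ext (hw.1.trans hw'.1.symm)
      rw [← hw.2, ← hw'.2, this]
  · rintro u u' v (h1 | h1) (h2 | h2)
    · exact hG.inj _ _ _ h1 h2
    · exact absurd (mB _ _ h2) (nB _ _ h1)
    · exact absurd (mB _ _ h1) (nB _ _ h2)
    · obtain ⟨w, hw⟩ := h1
      obtain ⟨w', hw'⟩ := h2
      simp only [Prod.mk.injEq] at hw hw'
      have : w = w' := e.injective (Subtype.ext (hw.2.trans hw'.2.symm))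
      rw [← hw.1, ← hw'.1, this]
  · rw [Set.image_union, f1]; exact hG.openX.union hA.isOpen
  · rw [Set.image_union, f2]; exact hG.openY.union hB.isOpen
  · rw [Set.image_union, f1]
    rintro (h | h)
    · exact hG.sX h
    · exact (hAN h).2 rfl
  · rw [Set.image_union, f2]
    rintro (h | h)
    · exact hG.tY h
    · exact (hBN h).2 rfl
  · rw [Set.image_union, f1]; exact Or.inr hxA

theorem homeo_aux {X Y : Type*} [TopologicalSpace X] [CompactSpace X] [T2Space X] [Countable X]
    [TopologicalSpace Y] [CompactSpace Y] [T2Space Y] [Countable Y] {a : Ordinal.{0}} {s : X} {t : Y}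
    (hs : cbDeriv X a = {s}) (ht : cbDeriv Y a = {t})
    (hH : ∀ r < a, ∀ (A : Set X) (B : Set Y) (x : X) (y : Y), IsClopen A → IsClopen B →
      A ∩ cbDeriv X r = {x} → B ∩ cbDeriv Y r = {y} → Nonempty (A ≃ₜ B)) :
    Nonempty (X ≃ₜ Y) := by
  have : Nonempty X := ⟨s⟩
  have : Nonempty Y := ⟨t⟩
  obtain ⟨u, hu⟩ := exists_surjective_nat X
  obtain ⟨v, hv⟩ := exists_surjective_nat Y
  have step : ∀ (n : ℕ) (G : {G : Set (X × Y) // GoodRel s t G}),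
      ∃ G' : {G : Set (X × Y) // GoodRel s t G}, G.1 ⊆ G'.1 ∧
        (u n ≠ s → u n ∈ Prod.fst '' G'.1) ∧ (v n ≠ t → v n ∈ Prod.snd '' G'.1) := by
    intro n G
    obtain ⟨G1, h1, h2, h3⟩ : ∃ G' : Set (X × Y), G.1 ⊆ G' ∧ GoodRel s t G' ∧
        (u n ≠ s → u n ∈ Prod.fst '' G') := by
      by_cases h : u n = s
      · exact ⟨G.1, subset_rfl, G.2, fun h' => absurd h h'⟩
      · obtain ⟨G', a, b, c⟩ := good_step hs ht hH G.2 (u n) h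
        exact ⟨G', a, b, fun _ => c⟩
    obtain ⟨G2, h4, h5, h6⟩ : ∃ G' : Set (X × Y), G1 ⊆ G' ∧ GoodRel s t G' ∧
        (v n ≠ t → v n ∈ Prod.snd '' G') := by
      by_cases h : v n = t
      · exact ⟨G1, subset_rfl, h2, fun h' => absurd h h'⟩
      · obtain ⟨G', a, b, c⟩ := good_step ht hs (fun r hr A B x y hA hB h1 h2 => by
          obtain ⟨e⟩ := hH r hr B A y x hB hA h2 h1
          exact ⟨e.symm⟩) h2.swap (v n) h
        refine ⟨Prod.swap ⁻¹' G', fun z hz => a hz, b.swap, fun _ => ?_⟩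
        obtain ⟨z, hz, hz'⟩ := c
        exact ⟨z.swap, by simpa using hz, by simpa using hz'⟩
    exact ⟨⟨G2, h5⟩, h1.trans h4, fun h => Set.image_mono h4 (h3 h), h6⟩
  choose F hF1 hF2 hF3 using step
  have g0 : GoodRel s t (∅ : Set (X × Y)) := by
    constructor <;> simp
  let S : ℕ → {G : Set (X × Y) // GoodRel s t G} := fun n => Nat.rec ⟨∅, g0⟩ (fun n G => F n G) n
  have hS : ∀ n, S (n + 1) = F n (S n) := fun n => rfl
  have mono : Monotone (fun n => (S n).1) := by
    refine monotone_nat_of_le_succ fun n => ?_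
    change (S n).1 ⊆ (S (n+1)).1
    rw [hS]; exact hF1 _ _
  have cX : ∀ x, x ≠ s → ∃ n, x ∈ Prod.fst '' (S n).1 := by
    intro x hx
    obtain ⟨n, rfl⟩ := hu x
    exact ⟨n + 1, by rw [hS]; exact hF2 n _ hx⟩
  have cY : ∀ y, y ≠ t → ∃ n, y ∈ Prod.snd '' (S n).1 := by
    intro x hx
    obtain ⟨n, rfl⟩ := hv x
    exact ⟨n + 1, by rw [hS]; exact hF3 n _ hx⟩
  -- membership with first coordinate in the n-th domain
  have inX : ∀ n m x y, x ∈ Prod.fst '' (S n).1 → (x, y) ∈ (S m).1 → (x, y) ∈ (S n).1 := by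
    rintro n m x y ⟨⟨x', y'⟩, h1, rfl⟩ h2
    have e1 := mono (le_max_left n m) h1
    have e2 := mono (le_max_right n m) h2
    rw [(S (max n m)).2.fn _ _ _ e2 e1]; exact h1
  have inY : ∀ n m x y, y ∈ Prod.snd '' (S n).1 → (x, y) ∈ (S m).1 → (x, y) ∈ (S n).1 := by
    rintro n m x y ⟨⟨x', y'⟩, h1, rfl⟩ h2
    have e1 := mono (le_max_left n m) h1
    have e2 := mono (le_max_right n m) h2
    rw [(S (max n m)).2.inj _ _ _ e2 e1]; exact h1
  let R : Set (X × Y) := {p | (∃ n, p ∈ (S n).1) ∨ p = (s, t)}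
  have nsX : ∀ n y, (s, y) ∉ (S n).1 := fun n y h => (S n).2.sX ⟨_, h, rfl⟩
  have ntY : ∀ n x, (x, t) ∉ (S n).1 := fun n y h => (S n).2.tY ⟨_, h, rfl⟩
  refine homeo_of_rel R ?_ ?_ ?_ ?_ ?_
  · rw [← isOpen_compl_iff, isOpen_iff_mem_nhds]
    rintro ⟨x, y⟩ hxy
    have hxy' : ∀ n, (x, y) ∉ (S n).1 := fun n h => hxy (Or.inl ⟨n, h⟩)
    by_cases hx : x = s
    · have hy : y ≠ t := by rintro rfl; exact hxy (Or.inr (by rw [hx]))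
      obtain ⟨n, hn⟩ := cY y hy
      have o1 := (S n).2.openY.preimage (continuous_snd (X := X))
      filter_upwards [o1.mem_nhds hn, (S n).2.closed.isOpen_compl.mem_nhds (hxy' n)]
      rintro ⟨x', y'⟩ h1 h2 (⟨m, h3⟩ | h3)
      · exact h2 (inY n m _ _ h1 h3)
      · obtain ⟨-, rfl⟩ := Prod.mk.inj h3
        exact (S n).2.tY h1
    · obtain ⟨n, hn⟩ := cX x hx
      have o1 := (S n).2.openX.preimage (continuous_fst (Y := Y))
      filter_upwards [o1.mem_nhds hn, (S n).2.closed.isOpen_compl.mem_nhds (hxy' n)]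
      rintro ⟨x', y'⟩ h1 h2 (⟨m, h3⟩ | h3)
      · exact h2 (inX n m _ _ h1 h3)
      · obtain ⟨rfl, -⟩ := Prod.mk.inj h3
        exact (S n).2.sX h1
  · intro x
    by_cases hx : x = s
    · exact ⟨t, Or.inr (by rw [hx])⟩
    · obtain ⟨n, ⟨x', y⟩, h, rfl⟩ := cX x hx
      exact ⟨y, Or.inl ⟨n, h⟩⟩
  · intro y
    by_cases hy : y = t
    · exact ⟨s, Or.inr (by rw [hy])⟩
    · obtain ⟨n, ⟨x, y'⟩, h, rfl⟩ := cY y hy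
      exact ⟨x, Or.inl ⟨n, h⟩⟩
  · rintro x y y' (⟨n, h1⟩ | h1) (⟨m, h2⟩ | h2)
    · exact (S (max n m)).2.fn _ _ _ (mono (le_max_left n m) h1) (mono (le_max_right n m) h2)
    · obtain ⟨rfl, -⟩ := Prod.mk.inj h2
      exact absurd h1 (nsX _ _)
    · obtain ⟨rfl, -⟩ := Prod.mk.inj h1
      exact absurd h2 (nsX _ _)
    · exact (Prod.mk.inj h1).2.trans (Prod.mk.inj h2).2.symm
  · rintro x x' y (⟨n, h1⟩ | h1) (⟨m, h2⟩ | h2)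
    · exact (S (max n m)).2.inj _ _ _ (mono (le_max_left n m) h1) (mono (le_max_right n m) h2)
    · obtain ⟨-, rfl⟩ := Prod.mk.inj h2
      exact absurd h1 (ntY _ _)
    · obtain ⟨-, rfl⟩ := Prod.mk.inj h1
      exact absurd h2 (ntY _ _)
    · exact (Prod.mk.inj h1).1.trans (Prod.mk.inj h2).1.symm

theorem cb_clopen_single {X : Type*} [TopologicalSpace X] {A : Set X} (hA : IsOpen A)
    {r : Ordinal.{0}} {x : X} (h : A ∩ cbDeriv X r = {x}) :
    ∃ x' : A, cbDeriv A r = {x'} := by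
  have hx : x ∈ A ∩ cbDeriv X r := by rw [h]; rfl
  refine ⟨⟨x, hx.1⟩, ?_⟩
  ext z
  rw [cb_openEmb hA.isOpenEmbedding_subtypeVal]
  constructor
  · intro hz
    have : (z : X) ∈ A ∩ cbDeriv X r := ⟨z.2, hz⟩
    rw [h] at this
    exact Subtype.ext this
  · rintro rfl
    exact hx.2

universe uu vv

theorem homeo_single (a : Ordinal.{0}) : ∀ (X : Type uu) (Y : Type vv) [TopologicalSpace X]
    [CompactSpace X] [T2Space X] [Countable X] [TopologicalSpace Y] [CompactSpace Y] [T2Space Y]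
    [Countable Y] (s : X) (t : Y), cbDeriv X a = {s} → cbDeriv Y a = {t} → Nonempty (X ≃ₜ Y) := by
  induction a using WellFoundedLT.induction with
  | ind a ih =>
    intro X Y _ _ _ _ _ _ _ _ s t hs ht
    refine homeo_aux hs ht ?_
    intro r hr A B x y hA hB hAx hBy
    have : CompactSpace A := isCompact_iff_compactSpace.1 hA.isClosed.isCompact
    have : CompactSpace B := isCompact_iff_compactSpace.1 hB.isClosed.isCompact
    obtain ⟨x', hx'⟩ := cb_clopen_single hA.isOpen hAx
    obtain ⟨y', hy'⟩ := cb_clopen_single hB.isOpen hBy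
    exact ih r hr A B x' y' hx' hy'

end HomeoSec

section WedgeSec

theorem exists_sep {L : Type*} [TopologicalSpace L] [CompactSpace L] [T2Space L] [Countable L]
    (Z : Set L) (hZ : IsClosed Z) : ∃ c : L → (ℕ → Bool), Continuous c ∧
      (∀ z ∈ Z, c z = fun _ => false) ∧ ∀ y y', y ∉ Z → c y = c y' → y = y' := by
  classical
  rcases isEmpty_or_nonempty L with hL | hL
  · exact ⟨fun _ _ => false, by fun_prop, fun _ _ => rfl, fun y => isEmptyElim y⟩
  have key : ∀ p : L × L, ∃ U : Set L, IsClopen U ∧ Disjoint U Z ∧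
      (p.1 ∉ Z → p.1 ≠ p.2 → p.1 ∈ U ∧ p.2 ∉ U) := by
    intro p
    by_cases h : p.1 ∉ Z ∧ p.1 ≠ p.2
    · obtain ⟨U, hU, hp, hUs⟩ := clopen_nhd (inter_mem (hZ.isOpen_compl.mem_nhds h.1)
        (isOpen_compl_singleton.mem_nhds h.2))
      refine ⟨U, hU, Set.disjoint_left.2 fun z hz => (hUs hz).1, fun _ _ => ⟨hp, fun hz => ?_⟩⟩
      exact (hUs hz).2 rfl
    · exact ⟨∅, isClopen_empty, by simp, fun h1 h2 => absurd ⟨h1, h2⟩ h⟩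
  choose U hU hUZ hUp using key
  obtain ⟨e, he⟩ := exists_surjective_nat (L × L)
  refine ⟨fun y n => (U (e n)).boolIndicator y, ?_, ?_, ?_⟩
  · refine continuous_pi fun n => ?_
    exact (continuous_boolIndicator_iff_isClopen _).2 (hU _)
  · intro z hz
    funext n
    exact (Set.notMem_iff_boolIndicator _ _).1 (Set.disjoint_right.1 (hUZ _) hz)
  · intro y y' hy h
    by_contra hne
    obtain ⟨n, hn⟩ := he (y, y')
    have h1 : (U (e n)).boolIndicator y = (U (e n)).boolIndicator y' := congrFun h n
    have h2 := hUp (e n) (by rw [hn]; exact hy) (by rw [hn]; exact hne)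
    rw [hn] at h1 h2
    have h3 := (Set.mem_iff_boolIndicator _ _).1 h2.1
    have h4 := (Set.notMem_iff_boolIndicator _ _).1 h2.2
    simp only at h3 h4
    rw [h3, h4] at h1
    exact absurd h1 (by simp)

theorem exists_retr {L : Type*} [TopologicalSpace L] [CompactSpace L] [T2Space L] [Countable L]
    (Z : Set L) (hZ : IsClosed Z) (hne : Z.Nonempty) : ∃ r : C(L, Z), ∀ z : Z, r z = z := by
  obtain ⟨c, hc, -, hinj⟩ := exists_sep (∅ : Set L) isClosed_empty
  have : CompactSpace Z := isCompact_iff_compactSpace.1 hZ.isCompact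
  have hne' : Nonempty Z := hne.to_subtype
  let j : Z → (ℕ → Bool) := fun z => c z
  have hj : IsClosedEmbedding j := by
    refine Continuous.isClosedEmbedding (by fun_prop) ?_
    intro a b hab
    exact Subtype.ext (hinj a b (by simp) hab)
  obtain ⟨f, hf, -, hfc⟩ := PiNat.exists_retraction_subtype_of_isClosed hj.isClosed_range
    (Set.range_nonempty j)
  let e := hj.isEmbedding.toHomeomorph
  refine ⟨⟨fun y => e.symm (f (c y)), by fun_prop⟩, fun z => ?_⟩
  change e.symm (f (c z)) = z
  rw [Homeomorph.symm_apply_eq]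
  exact hf ⟨j z, z, rfl⟩

structure IsWedge {L Q : Type*} [TopologicalSpace L] [TopologicalSpace Q] (Z : Set L) (t : Z)
    (qz : C(Z, Q)) (qy : C(L, Q)) : Prop where
  surj : ∀ q, (∃ z, qz z = q) ∨ ∃ y, qy y = q
  injz : ∀ z z', qz z = qz z' → z = z'
  coll : ∀ z : Z, qy z = qz t
  injy : ∀ y y', y ∉ Z → qy y = qy y' → y = y'
  sep : ∀ z y, qz z = qy y → z = t ∧ y ∈ Z

universe uu

theorem exists_wedge {L : Type uu} [TopologicalSpace L] [CompactSpace L] [T2Space L] [Countable L]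
    (Z : Set L) (hZ : IsClosed Z) (t : Z) : ∃ (Q : Type uu) (_ : TopologicalSpace Q)
      (_ : CompactSpace Q) (_ : T2Space Q) (_ : Countable Q) (qz : C(Z, Q)) (qy : C(L, Q)),
      IsWedge Z t qz qy := by
  obtain ⟨c, hc, hcZ, hinj⟩ := exists_sep Z hZ
  have : CompactSpace Z := isCompact_iff_compactSpace.1 hZ.isCompact
  let q : Z ⊕ L → Z × (ℕ → Bool) := Sum.elim (fun z => (z, fun _ => false)) (fun y => (t, c y))
  have hq : Continuous q := by
    refine Continuous.sumElim (by fun_prop) (by fun_prop)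
  have hct : c t = fun _ => false := hcZ t t.2
  have cz : ∀ y, c y = (fun _ => false) → y ∈ Z := by
    intro y hy
    by_contra h
    have := hinj y t h (hy.trans hct.symm)
    exact h (this ▸ t.2)
  refine ⟨Set.range q, inferInstance, isCompact_iff_compactSpace.1 (isCompact_range hq),
    inferInstance, (Set.countable_range q).to_subtype, ⟨fun z => ⟨q (Sum.inl z), Set.mem_range_self _⟩, by fun_prop⟩,
    ⟨fun y => ⟨q (Sum.inr y), Set.mem_range_self _⟩, by fun_prop⟩, ?_⟩
  constructor
  · rintro ⟨_, z | y, rfl⟩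
    · exact Or.inl ⟨z, rfl⟩
    · exact Or.inr ⟨y, rfl⟩
  · intro z z' h
    exact (Prod.mk.inj (Subtype.mk.inj h)).1
  · intro z
    refine Subtype.ext ?_
    change (t, c z) = (t, fun _ => false)
    rw [hcZ z z.2]
  · intro y y' hy h
    exact hinj y y' hy (Prod.mk.inj (Subtype.mk.inj h)).2
  · intro z y h
    have := Prod.mk.inj (Subtype.mk.inj h)
    exact ⟨this.1, cz y this.2.symm⟩

section

variable {L Q : Type*} [TopologicalSpace L] [CompactSpace L] [T2Space L] [Countable L]
  [TopologicalSpace Q] [CompactSpace Q] [T2Space Q] [Countable Q] {Z : Set L} {t : Z}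
  {qz : C(Z, Q)} {qy : C(L, Q)}

theorem IsWedge.lift (h : IsWedge Z t qz qy) (hZ : IsClosed Z) (u : C(Z, ℝ)) (v : C(L, ℝ))
    (huv : ∀ z : Z, v z = u t) : ∃ f : C(Q, ℝ), (∀ z, f (qz z) = u z) ∧ ∀ y, f (qy y) = v y := by
  have : CompactSpace Z := isCompact_iff_compactSpace.1 hZ.isCompact
  have key : ∀ q, ∃ x : ℝ, (∀ z, qz z = q → x = u z) ∧ ∀ y, qy y = q → x = v y := by
    intro q
    rcases h.surj q with ⟨z, rfl⟩ | ⟨y, rfl⟩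
    · refine ⟨u z, fun z' hz' => by rw [h.injz _ _ hz'], fun y hy => ?_⟩
      obtain ⟨rfl, hy'⟩ := h.sep z y hy.symm
      exact (huv ⟨y, hy'⟩).symm
    · refine ⟨v y, fun z hz => ?_, fun y' hy' => ?_⟩
      · obtain ⟨rfl, hy'⟩ := h.sep z y hz
        exact huv ⟨y, hy'⟩
      · by_cases hyZ : y ∈ Z
        · have h1 := h.sep t y' (by rw [hy']; exact (h.coll ⟨y, hyZ⟩).symm)
          exact (huv ⟨y, hyZ⟩).trans (huv ⟨y', h1.2⟩).symm
        · rw [h.injy y y' hyZ hy'.symm]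
  choose f hf1 hf2 using key
  have c1 : ∀ z, f (qz z) = u z := fun z => hf1 _ z rfl
  have c2 : ∀ y, f (qy y) = v y := fun z => hf2 _ z rfl
  refine ⟨⟨f, ?_⟩, c1, c2⟩
  rw [continuous_iff_isClosed]
  intro F hF
  have : f ⁻¹' F = qz '' (u ⁻¹' F) ∪ qy '' (v ⁻¹' F) := by
    ext q
    constructor
    · intro hq
      rcases h.surj q with ⟨z, rfl⟩ | ⟨y, rfl⟩
      · exact Or.inl ⟨z, by rw [Set.mem_preimage, ← c1]; exact hq, rfl⟩
      · exact Or.inr ⟨y, by rw [Set.mem_preimage, ← c2]; exact hq, rfl⟩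
    · rintro (⟨z, hz, rfl⟩ | ⟨y, hy, rfl⟩)
      · rw [Set.mem_preimage, c1]; exact hz
      · rw [Set.mem_preimage, c2]; exact hy
  rw [this]
  exact ((hF.preimage u.continuous).isCompact.image qz.continuous).isClosed.union
    ((hF.preimage v.continuous).isCompact.image qy.continuous).isClosed

/-- Positive isomorphism from the wedge. -/
theorem IsWedge.posIso (h : IsWedge Z t qz qy) (hZ : IsClosed Z) :
    ∃ T : C(Q, ℝ) ≃L[ℝ] C(L, ℝ), ∀ f, 0 ≤ f → 0 ≤ T f := by
  obtain ⟨r, hr⟩ := exists_retr Z hZ ⟨t, t.2⟩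
  let S : C(Q, ℝ) →L[ℝ] C(L, ℝ) :=
    { toFun := fun f => f.comp qy + f.comp (qz.comp r)
      map_add' := by intro f g; ext; simp; ring
      map_smul' := by intro c f; ext; simp
      cont := (ContinuousMap.continuous_precomp _).add (ContinuousMap.continuous_precomp _) }
  have hS : ∀ f y, S f y = f (qy y) + f (qz (r y)) := fun f y => rfl
  have hker : LinearMap.ker (S : C(Q, ℝ) →ₗ[ℝ] C(L, ℝ)) = ⊥ := by
    rw [LinearMap.ker_eq_bot']
    intro f hf
    have e : ∀ y, f (qy y) + f (qz (r y)) = 0 := fun y => by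
      rw [← hS]; exact congrArg (fun g : C(L, ℝ) => g y) hf
    have e1 : f (qz t) = 0 := by
      have := e t
      rw [hr, h.coll] at this
      linarith
    have e2 : ∀ z, f (qz z) = 0 := fun z => by
      have := e z
      rw [hr, h.coll] at this
      linarith
    ext q
    rcases h.surj q with ⟨z, rfl⟩ | ⟨y, rfl⟩
    · exact e2 z
    · have := e y
      rw [e2] at this
      simpa using this
  have hran : LinearMap.range (S : C(Q, ℝ) →ₗ[ℝ] C(L, ℝ)) = ⊤ := by
    rw [LinearMap.range_eq_top]
    intro g
    let u : C(Z, ℝ) := ⟨fun z => g z - g t / 2, by fun_prop⟩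
    let v : C(L, ℝ) := ⟨fun y => g y - u (r y), by fun_prop⟩
    obtain ⟨f, hf1, hf2⟩ := h.lift hZ u v (fun z => by
      change g z - (g (r z) - g t / 2) = g t - g t / 2
      rw [hr]; ring)
    refine ⟨f, ?_⟩
    ext y
    change S f y = g y
    rw [hS, hf1, hf2]
    change g y - u (r y) + u (r y) = g y
    ring
  refine ⟨ContinuousLinearEquiv.ofBijective S hker hran, fun f hf => ?_⟩
  rw [ContinuousMap.le_def]
  intro y
  change 0 ≤ S f y
  rw [hS]
  exact add_nonneg (hf _) (hf _)

set_option maxHeartbeats 2000000 in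
/-- Positive isomorphism onto the wedge, when `Z` is finite. -/
theorem IsWedge.posIso' (h : IsWedge Z t qz qy) (hZf : Z.Finite) :
    ∃ T : C(L, ℝ) ≃L[ℝ] C(Q, ℝ), ∀ f, 0 ≤ f → 0 ≤ T f := by
  classical
  have hZ : IsClosed Z := hZf.isClosed
  have : Finite Z := hZf
  have : Fintype Z := Fintype.ofFinite Z
  have : DiscreteTopology Z := inferInstance
  obtain ⟨r, hr⟩ := exists_retr Z hZ ⟨t, t.2⟩
  let psi : C(Z, ℝ) := ⟨fun z => if z = t then 1 else 0, continuous_of_discreteTopology⟩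
  have psi_t : psi t = 1 := if_pos rfl
  have psi_n : ∀ z, z ≠ t → psi z = 0 := fun z hz => if_neg hz
  let sg : C(Q, ℝ) →L[ℝ] ℝ := ∑ z ∈ Finset.univ.erase t, ContinuousMap.evalCLM ℝ (qz z)
  have hsg : ∀ g, sg g = ∑ z ∈ Finset.univ.erase t, g (qz z) := by
    intro g
    simp [sg]
  let S : C(Q, ℝ) →L[ℝ] C(L, ℝ) :=
    { toFun := fun g => g.comp qy - (g (qz t)) • (1 : C(L, ℝ)) + g.comp (qz.comp r)
        - sg g • (psi.comp r)
      map_add' := by intro f g; ext; simp; ring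
      map_smul' := by intro c f; ext; simp; ring
      cont := (((ContinuousMap.continuous_precomp _).sub
        ((continuous_eval_const _).smul continuous_const)).add
        (ContinuousMap.continuous_precomp _)).sub (sg.continuous.smul continuous_const) }
  have hS : ∀ g y, S g y = g (qy y) - g (qz t) + g (qz (r y)) - sg g * psi (r y) := by
    intro g y
    change g (qy y) - g (qz t) * 1 + g (qz (r y)) - sg g * psi (r y) = _
    ring
  have hSz : ∀ g (z : Z), z ≠ t → S g z = g (qz z) := by
    intro g z hz
    rw [hS, hr, h.coll, psi_n z hz]; ring
  have hSt : ∀ g, S g t = g (qz t) - sg g := by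
    intro g
    rw [hS, hr, h.coll, psi_t]; ring
  have hSsum : ∀ g, ∑ z : Z, S g z = g (qz t) := by
    intro g
    rw [← Finset.add_sum_erase _ _ (Finset.mem_univ t), hSt, hsg,
      Finset.sum_congr rfl fun z hz => hSz g z (Finset.ne_of_mem_erase hz)]
    ring
  have hSy : ∀ g y, g (qy y) = S g y + (∑ z : Z, S g z - S g (r y)) := by
    intro g y
    rw [hSsum, hS g (r y), hS g y, hr, h.coll]
    ring
  have hpos : ∀ g, 0 ≤ S g → 0 ≤ g := by
    intro g hg
    rw [ContinuousMap.le_def]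
    intro q
    change 0 ≤ g q
    rcases h.surj q with ⟨z, rfl⟩ | ⟨y, rfl⟩
    · by_cases hz : z = t
      · rw [hz, ← hSsum]
        exact Finset.sum_nonneg fun z _ => hg _
      · rw [← hSz g z hz]; exact hg _
    · rw [hSy]
      refine add_nonneg (hg _) (sub_nonneg.2 ?_)
      exact Finset.single_le_sum (f := fun z : Z => S g z) (fun z _ => hg _) (Finset.mem_univ (r y))
  have hker : LinearMap.ker (S : C(Q, ℝ) →ₗ[ℝ] C(L, ℝ)) = ⊥ := by
    rw [LinearMap.ker_eq_bot']
    intro f hf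
    have hf' : S f = 0 := hf
    refine le_antisymm ?_ (hpos f (by rw [hf']))
    have := hpos (-f) (by rw [map_neg, hf', neg_zero])
    exact neg_nonneg.1 this
  have hran : LinearMap.range (S : C(Q, ℝ) →ₗ[ℝ] C(L, ℝ)) = ⊤ := by
    rw [LinearMap.range_eq_top]
    intro f
    let u : C(Z, ℝ) := ⟨fun z => if z = t then ∑ z : Z, f z else f z,
      continuous_of_discreteTopology⟩
    have ut : u t = ∑ z : Z, f z := if_pos rfl
    have un : ∀ z, z ≠ t → u z = f z := fun z hz => if_neg hz
    let v : C(L, ℝ) := ⟨fun y => f y + (∑ z : Z, f z - f (r y)), by fun_prop⟩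
    obtain ⟨g, hg1, hg2⟩ := h.lift hZ u v (fun z => by
      change f z + (∑ z : Z, f z - f (r z)) = u t
      rw [hr, ut]; ring)
    refine ⟨g, ?_⟩
    ext y
    change S g y = f y
    have e1 : sg g = ∑ z : Z, f z - f t := by
      rw [hsg, ← Finset.add_sum_erase _ _ (Finset.mem_univ t),
        Finset.sum_congr rfl fun z hz => (hg1 z).trans (un z (Finset.ne_of_mem_erase hz))]
      ring
    rw [hS, hg1, hg2, hg1, e1, ut]
    change f y + (∑ z : Z, f z - f (r y)) - _ + _ - _ = _
    by_cases hz : r y = t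
    · rw [hz, psi_t, ut]; ring
    · rw [un _ hz, psi_n _ hz]; ring
  let e := ContinuousLinearEquiv.ofBijective S hker hran
  refine ⟨e.symm, fun f hf => ?_⟩
  apply hpos
  have : S (e.symm f) = f := e.apply_symm_apply f
  rw [this]; exact hf

end

end WedgeSec

section WedgeHeights

variable {L Q : Type*} [TopologicalSpace L] [CompactSpace L] [T2Space L] [Countable L]
  [TopologicalSpace Q] [CompactSpace Q] [T2Space Q] [Countable Q] {Z : Set L} {t : Z}
  {qz : C(Z, Q)} {qy : C(L, Q)}

theorem IsWedge.cb_y (h : IsWedge Z t qz qy) (hZ : IsClosed Z) (o : Ordinal.{0}) {y : L}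
    (hy : y ∉ Z) : y ∈ cbDeriv L o ↔ qy y ∈ cbDeriv Q o := by
  have : CompactSpace Z := isCompact_iff_compactSpace.1 hZ.isCompact
  let j : (Zᶜ : Set L) → Q := fun y => qy y
  have hj : IsOpenEmbedding j := by
    refine IsOpenEmbedding.of_continuous_injective_isOpenMap (by fun_prop) ?_ ?_
    · intro a b hab
      exact Subtype.ext (h.injy a b a.2 hab)
    · intro U hU
      have hU' : IsOpen (Subtype.val '' U) := hZ.isOpen_compl.isOpenMap_subtype_val U hU
      have e : j '' U = (Set.range qz ∪ qy '' (Subtype.val '' U)ᶜ)ᶜ := by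
        ext q
        constructor
        · rintro ⟨y, hy, rfl⟩ (⟨z, hz⟩ | ⟨y', hy', he⟩)
          · exact y.2 (h.sep _ _ hz).2
          · have := h.injy y y' y.2 he.symm
            exact hy' ⟨y, hy, this⟩
        · intro hq
          rcases h.surj q with ⟨z, rfl⟩ | ⟨y, rfl⟩
          · exact absurd (Or.inl ⟨z, rfl⟩) hq
          · by_cases hyU : y ∈ Subtype.val '' U
            · obtain ⟨w, hw, rfl⟩ := hyU
              exact ⟨w, hw, rfl⟩
            · exact absurd (Or.inr ⟨y, hyU, rfl⟩) hq
      rw [e, isOpen_compl_iff]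
      exact (isCompact_range qz.continuous).isClosed.union
        (hU'.isClosed_compl.isCompact.image qy.continuous).isClosed
  have h1 := cb_openEmb hZ.isOpen_compl.isOpenEmbedding_subtypeVal o ⟨y, hy⟩
  have h2 := cb_openEmb hj o ⟨y, hy⟩
  exact h1.symm.trans h2

theorem IsWedge.cb_z (h : IsWedge Z t qz qy) (hZ : IsClosed Z) (o : Ordinal.{0}) {z : Z}
    (hz : z ≠ t) : z ∈ cbDeriv Z o ↔ qz z ∈ cbDeriv Q o := by
  have : CompactSpace Z := isCompact_iff_compactSpace.1 hZ.isCompact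
  let j : ({t}ᶜ : Set Z) → Q := fun y => qz y
  have ho : IsOpen ({t}ᶜ : Set Z) := isOpen_compl_singleton
  have hj : IsOpenEmbedding j := by
    refine IsOpenEmbedding.of_continuous_injective_isOpenMap (by fun_prop) ?_ ?_
    · intro a b hab
      exact Subtype.ext (h.injz a b hab)
    · intro U hU
      have hU' : IsOpen (Subtype.val '' U) := ho.isOpenMap_subtype_val U hU
      have e : j '' U = (Set.range qy ∪ qz '' (Subtype.val '' U)ᶜ)ᶜ := by
        ext q
        constructor
        · rintro ⟨y, hy, rfl⟩ (⟨z, hz⟩ | ⟨y', hy', he⟩)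
          · exact y.2 (h.sep _ _ hz.symm).1
          · have := h.injz y y' he.symm
            exact hy' ⟨y, hy, this⟩
        · intro hq
          rcases h.surj q with ⟨z, rfl⟩ | ⟨y, rfl⟩
          · by_cases hyU : z ∈ Subtype.val '' U
            · obtain ⟨w, hw, rfl⟩ := hyU
              exact ⟨w, hw, rfl⟩
            · exact absurd (Or.inr ⟨z, hyU, rfl⟩) hq
          · exact absurd (Or.inl ⟨y, rfl⟩) hq
      rw [e, isOpen_compl_iff]
      exact (isCompact_range qy.continuous).isClosed.union
        (hU'.isClosed_compl.isCompact.image qz.continuous).isClosed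
  have h1 := cb_openEmb ho.isOpenEmbedding_subtypeVal o ⟨z, hz⟩
  have h2 := cb_openEmb hj o ⟨z, hz⟩
  exact h1.symm.trans h2

end WedgeHeights

section WedgeHeights2

variable {L Q : Type*} [TopologicalSpace L] [CompactSpace L] [T2Space L] [Countable L]
  [TopologicalSpace Q] [CompactSpace Q] [T2Space Q] [Countable Q] {a : Ordinal.{0}}
  {t : cbDeriv L a} {qz : C(cbDeriv L a, Q)} {qy : C(L, Q)}

theorem IsWedge.base_mem (h : IsWedge (cbDeriv L a) t qz qy) : qz t ∈ cbDeriv Q a := by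
  suffices H : ∀ o, o ≤ a → qz t ∈ cbDeriv Q o from H a le_rfl
  intro o
  induction o using ord_ind with
  | h0 => simp [cb_zero]
  | h1 o ih =>
    intro ho
    rw [cb_succ, mem_derivedSet, accPt_iff_nhds]
    intro N hN
    rw [← h.coll t] at hN
    have ht : (t : L) ∈ cbDeriv L o := cb_anti L (le_self_add.trans ho) t.2
    obtain ⟨y, hyN, hy1, hy2⟩ := exists_rank_near ht (qy.continuous.continuousAt hN)
    have hyZ : y ∉ cbDeriv L a := fun hh => hy2 (cb_anti L ho hh)
    refine ⟨qy y, ⟨hyN, (h.cb_y (cb_closed L a) o hyZ).1 hy1⟩, fun e => ?_⟩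
    exact hyZ (h.sep _ _ e.symm).2
  | h2 o hlim ih =>
    intro ho
    exact (mem_cb_limit hlim).2 fun b hb => ih b hb (hb.le.trans ho)

theorem IsWedge.cb_sub (h : IsWedge (cbDeriv L a) t qz qy) {m : Ordinal.{0}} (hm : a ≤ m) {q : Q}
    (hq : q ∈ cbDeriv Q m) : q = qz t ∨ ∃ z, z ≠ t ∧ z ∈ cbDeriv (cbDeriv L a) m ∧ q = qz z := by
  rcases h.surj q with ⟨z, rfl⟩ | ⟨y, rfl⟩
  · by_cases hz : z = t
    · left; rw [hz]
    · right
      exact ⟨z, hz, (h.cb_z (cb_closed L a) m hz).2 hq, rfl⟩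
  · by_cases hy : y ∈ cbDeriv L a
    · left; exact h.coll ⟨y, hy⟩
    · exact absurd (cb_anti L hm ((h.cb_y (cb_closed L a) m hy).2 hq)) hy

theorem IsWedge.single (h : IsWedge (cbDeriv L a) t qz qy) (ha : 1 ≤ a)
    (hf : (cbDeriv L a).Finite) : cbDeriv Q a = {qz t} := by
  ext q
  constructor
  · intro hq
    rcases h.cb_sub le_rfl hq with h1 | ⟨z, -, h2, -⟩
    · exact h1
    · exfalso
      have h3 := cb_anti _ ha h2
      have : (1 : Ordinal.{0}) = 0 + 1 := by simp
      rw [this, cb_succ, cb_zero] at h3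
      have : Finite (cbDeriv L a) := hf
      rw [derived_empty_of_finite Set.finite_univ] at h3
      exact h3
  · rintro rfl
    exact h.base_mem

theorem IsWedge.lower (h : IsWedge (cbDeriv L a) t qz qy) {τ : Ordinal.{0}}
    (hf : (cbDeriv L (a + τ)).Finite) : cbDeriv Q (max a τ + 1) = ∅ := by
  rw [cb_succ]
  apply derived_empty_of_finite
  have hfin : (cbDeriv (cbDeriv L a) τ).Finite := by
    refine Set.Finite.of_finite_image (f := Subtype.val) (hf.subset ?_)
      Subtype.val_injective.injOn
    rintro _ ⟨z, hz, rfl⟩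
    exact (_root_.cb_sub τ z).1 hz
  refine ((Set.finite_singleton (qz t)).union (hfin.image qz)).subset ?_
  intro q hq
  rcases h.cb_sub (le_max_left _ _) hq with h1 | ⟨z, -, h2, h3⟩
  · exact Or.inl h1
  · exact Or.inr ⟨z, cb_anti _ (le_max_right _ _) h2, h3.symm⟩

end WedgeHeights2

section Models

universe uu

theorem exists_model_to {K : Type uu} [TopologicalSpace K] [CompactSpace K] [T2Space K]
    [Countable K] {a : Ordinal.{0}} (ha : 1 ≤ a) (hne : (cbDeriv K a).Nonempty)
    (hf : (cbDeriv K a).Finite) :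
    ∃ (W : Type uu) (_ : TopologicalSpace W) (_ : CompactSpace W) (_ : T2Space W) (_ : Countable W)
      (s : W), cbDeriv W a = {s} ∧ ∃ T : C(K, ℝ) ≃L[ℝ] C(W, ℝ), ∀ f, 0 ≤ f → 0 ≤ T f := by
  obtain ⟨t, ht⟩ := hne
  obtain ⟨Q, i1, i2, i3, i4, qz, qy, h⟩ := exists_wedge (cbDeriv K a) (cb_closed K a) ⟨t, ht⟩
  exact ⟨Q, i1, i2, i3, i4, _, h.single ha hf, h.posIso' hf⟩

theorem exists_model_from {a : Ordinal.{0}} (ha : 1 ≤ a) (b : Ordinal.{0}) :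
    ∀ (L : Type uu) [TopologicalSpace L] [CompactSpace L] [T2Space L]
    [Countable L], a ≤ b → b < a * ω → (cbDeriv L b).Nonempty → (cbDeriv L b).Finite →
    ∃ (W : Type uu) (_ : TopologicalSpace W) (_ : CompactSpace W) (_ : T2Space W) (_ : Countable W)
      (s : W), cbDeriv W a = {s} ∧ ∃ T : C(W, ℝ) ≃L[ℝ] C(L, ℝ), ∀ f, 0 ≤ f → 0 ≤ T f := by
  induction b using WellFoundedLT.induction with
  | ind b ih =>
    intro L _ _ _ _ hab hb hne hf
    obtain ⟨t, ht⟩ := hne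
    obtain ⟨Q, i1, i2, i3, i4, qz, qy, h⟩ := exists_wedge (cbDeriv L a) (cb_closed L a)
      ⟨t, cb_anti L hab ht⟩
    obtain ⟨T, hT⟩ := h.posIso (cb_closed L a)
    rcases hab.eq_or_lt with rfl | hlt
    · exact ⟨Q, i1, i2, i3, i4, _, h.single ha hf, T, hT⟩
    obtain ⟨τ, rfl⟩ := exists_add_of_le hab
    have hτ : τ < a + τ := by
      refine lt_of_le_of_ne le_add_self fun e => ?_
      have h1 := Ordinal.add_eq_right_iff_mul_omega0_le.1 e.symm
      rw [← e] at hb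
      exact absurd h1 (not_le.2 hb)
    have hlow := h.lower hf
    have : Nonempty Q := ⟨qz ⟨t, cb_anti L hab ht⟩⟩
    obtain ⟨b', hb1, hb2, hb3, -⟩ := exists_top (X := Q)
    have hab' : a ≤ b' := by
      by_contra hc
      have := cb_anti Q (Order.add_one_le_iff.2 (not_le.1 hc)) h.base_mem
      rw [hb3] at this
      exact this
    have hb'b : b' < a + τ := by
      by_contra hc
      obtain ⟨q, hq⟩ := hb1
      have h2 : max a τ + 1 ≤ b' :=
        (Order.add_one_le_iff.2 (max_lt hlt hτ)).trans (not_lt.1 hc)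
      have := cb_anti Q h2 hq
      rw [hlow] at this
      exact this
    obtain ⟨W, j1, j2, j3, j4, s, hs, T', hT'⟩ := ih b' hb'b Q hab' (hb'b.trans hb) hb1 hb2
    exact ⟨W, j1, j2, j3, j4, s, hs, T'.trans T, fun f hf => hT _ (hT' f hf)⟩

end Models

section PartA

/-- Indicator function of a clopen set, as a continuous function. -/
noncomputable def cind {X : Type*} [TopologicalSpace X] (U : Set X) (hU : IsClopen U) : C(X, ℝ) :=
  ⟨U.indicator (fun _ => 1), continuous_const.indicator (by rw [hU.frontier_eq]; simp)⟩

theorem cind_of_mem {X : Type*} [TopologicalSpace X] {U : Set X} (hU : IsClopen U) {x : X}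
    (hx : x ∈ U) : cind U hU x = 1 := by
  simp [cind, hx]

theorem cind_of_not_mem {X : Type*} [TopologicalSpace X] {U : Set X} (hU : IsClopen U) {x : X}
    (hx : x ∉ U) : cind U hU x = 0 := by
  simp [cind, hx]

theorem cind_nonneg {X : Type*} [TopologicalSpace X] {U : Set X} (hU : IsClopen U) :
    0 ≤ cind U hU := by
  refine ContinuousMap.le_def.2 fun x => ?_
  by_cases hx : x ∈ U
  · rw [cind_of_mem hU hx]; simp
  · rw [cind_of_not_mem hU hx]; simp

theorem cind_mono {X : Type*} [TopologicalSpace X] {U V : Set X} (hU : IsClopen U)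
    (hV : IsClopen V) (h : U ⊆ V) : cind U hU ≤ cind V hV := by
  refine ContinuousMap.le_def.2 fun x => ?_
  by_cases hx : x ∈ U
  · rw [cind_of_mem hU hx, cind_of_mem hV (h hx)]
  · rw [cind_of_not_mem hU hx]; exact cind_nonneg hV x

theorem sum_cind_le {X : Type*} [TopologicalSpace X] (F : Finset X) (V : X → Set X)
    (hV : ∀ x, IsClopen (V x)) (hd : (F : Set X).PairwiseDisjoint V) :
    ∑ x ∈ F, cind (V x) (hV x) ≤ 1 := by
  refine ContinuousMap.le_def.2 fun z => ?_
  rw [ContinuousMap.sum_apply]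
  by_cases h : ∃ x ∈ F, z ∈ V x
  · obtain ⟨x, hx, hz⟩ := h
    rw [Finset.sum_eq_single x, cind_of_mem _ hz]
    · simp
    · intro w hw hne
      exact cind_of_not_mem _ fun hzw => (Set.disjoint_left.1 (hd hw hx hne)) hzw hz
    · intro h; exact absurd hx h
  · rw [Finset.sum_eq_zero]
    · simp
    · intro w hw
      exact cind_of_not_mem _ fun hzw => h ⟨w, hw, hzw⟩

theorem posA {K L : Type*} [TopologicalSpace K] [CompactSpace K] [T2Space K]
    [Countable K] [TopologicalSpace L] [CompactSpace L] [T2Space L] [Countable L]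
    (T : C(K, ℝ) ≃L[ℝ] C(L, ℝ)) (hT : ∀ f : C(K, ℝ), 0 ≤ f → 0 ≤ T f) {c : ℝ} (hc : 0 < c)
    (hcT : ∀ f, c * ‖f‖ ≤ ‖T f‖) (o : Ordinal.{0}) : ∀ x ∈ cbDeriv K o, ∃ y ∈ cbDeriv L o,
      ∀ U (hU : IsClopen U), x ∈ U → c ≤ T (cind U hU) y := by
  have hmono : ∀ f g : C(K, ℝ), f ≤ g → ∀ y, T f y ≤ T g y := by
    intro f g h y
    have := hT (g - f) (sub_nonneg.2 h) y
    rw [map_sub] at this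
    simpa using this
  have hcl : ∀ (o : Ordinal.{0}) U (hU : IsClopen U),
      IsClosed {y | y ∈ cbDeriv L o ∧ c ≤ T (cind U hU) y} := by
    intro o U hU
    exact (cb_closed L o).inter (isClosed_le continuous_const (T (cind U hU)).continuous)
  have hcpt : ∀ (o : Ordinal.{0}) (x : K), (∀ U (hU : IsClopen U), x ∈ U →
      ∃ y ∈ cbDeriv L o, c ≤ T (cind U hU) y) →
      ∃ y ∈ cbDeriv L o, ∀ U (hU : IsClopen U), x ∈ U → c ≤ T (cind U hU) y := by
    intro o x h
    let I := {U : Set K // IsClopen U ∧ x ∈ U}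
    have : Nonempty I := ⟨⟨Set.univ, isClopen_univ, mem_univ _⟩⟩
    obtain ⟨y, hy⟩ := IsCompact.nonempty_iInter_of_directed_nonempty_isCompact_isClosed
      (fun U : I => {y | y ∈ cbDeriv L o ∧ c ≤ T (cind U.1 U.2.1) y}) (by
        intro U V
        refine ⟨⟨U.1 ∩ V.1, U.2.1.inter V.2.1, U.2.2, V.2.2⟩, ?_, ?_⟩
        · exact fun y hy => ⟨hy.1, hy.2.trans (hmono _ _ (cind_mono _ _ inter_subset_left) y)⟩
        · exact fun y hy => ⟨hy.1, hy.2.trans (hmono _ _ (cind_mono _ _ inter_subset_right) y)⟩)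
      (fun U => by obtain ⟨y, h1, h2⟩ := h U.1 U.2.1 U.2.2; exact ⟨y, h1, h2⟩)
      (fun U => (hcl o _ _).isCompact) (fun U => hcl o _ _)
    rw [mem_iInter] at hy
    exact ⟨y, (hy ⟨Set.univ, isClopen_univ, mem_univ _⟩).1, fun U hU hx => (hy ⟨U, hU, hx⟩).2⟩
  induction o using ord_ind with
  | h0 =>
    intro x _
    apply hcpt
    intro U hU hx
    rw [cb_zero]
    by_contra hcon
    push Not at hcon
    have h1 : ‖T (cind U hU)‖ < c := by
      rw [ContinuousMap.norm_lt_iff _ hc]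
      intro y
      have h0 : 0 ≤ T (cind U hU) y := hT _ (cind_nonneg hU) y
      rw [Real.norm_of_nonneg h0]
      exact hcon y (mem_univ _)
    have h2 := hcT (cind U hU)
    have h3 := (cind U hU).norm_coe_le_norm x
    rw [cind_of_mem hU hx, norm_one] at h3
    nlinarith
  | h1 o ih =>
    intro x hx
    apply hcpt
    intro U hU hxU
    have hinf : {y | y ∈ cbDeriv L o ∧ c ≤ T (cind U hU) y}.Infinite := by
      intro hfin
      have hxinf : (U ∩ cbDeriv K o).Infinite := by
        rw [cb_succ, mem_derivedSet] at hx
        intro hf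
        have h1 : AccPt x (𝓟 (U ∩ cbDeriv K o)) := by
          exact AccPt.nhds_inter hx (hU.isOpen.mem_nhds hxU)
        have := derived_empty_of_finite hf
        rw [Set.eq_empty_iff_forall_notMem] at this
        exact this x h1
      have hch : ∀ x' : (U ∩ cbDeriv K o : Set K), ∃ y : {y | y ∈ cbDeriv L o ∧ c ≤ T (cind U hU) y},
          ∀ V (hV : IsClopen V), x'.1 ∈ V → c ≤ T (cind V hV) y := by
        intro x'
        obtain ⟨y, hy, hy2⟩ := ih x'.1 x'.2.2
        exact ⟨⟨y, hy, hy2 U hU x'.2.1⟩, hy2⟩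
      choose φ hφ using hch
      have : Finite {y | y ∈ cbDeriv L o ∧ c ≤ T (cind U hU) y} := hfin
      have : Infinite (U ∩ cbDeriv K o : Set K) := hxinf.to_subtype
      obtain ⟨y, hy⟩ := Finite.exists_infinite_fiber φ
      have hyinf : (Subtype.val '' (φ ⁻¹' {y})).Infinite :=
        (Set.infinite_coe_iff.1 hy).image Subtype.val_injective.injOn
      obtain ⟨n, hn⟩ := exists_nat_gt (‖T 1‖ / c)
      obtain ⟨F, hF, hFn⟩ := hyinf.exists_subset_card_eq n
      obtain ⟨V, hV, hd⟩ := F.finite_toSet.t2_separation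
      have hW : ∀ x, ∃ W, IsClopen W ∧ x ∈ W ∧ W ⊆ V x := fun x =>
        clopen_nhd ((hV x).2.mem_nhds (hV x).1)
      choose W hW1 hW2 hW3 using hW
      have h1 := hmono _ _ (sum_cind_le F W hW1 (hd.mono_on fun x _ => hW3 x)) y
      rw [map_sum, ContinuousMap.sum_apply] at h1
      have h2 : ∑ x ∈ F, c ≤ ∑ x ∈ F, T (cind (W x) (hW1 x)) y := by
        apply Finset.sum_le_sum
        intro x hx
        obtain ⟨x', hx', rfl⟩ := hF hx
        have := hφ x' _ (hW1 x'.1) (hW2 x'.1)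
        rwa [show φ x' = y from hx'] at this
      rw [Finset.sum_const, hFn, _root_.nsmul_eq_mul] at h2
      have h3 := (le_abs_self _).trans ((T 1).norm_coe_le_norm y)
      rw [div_lt_iff₀ hc] at hn
      linarith
    have hne : (derivedSet {y | y ∈ cbDeriv L o ∧ c ≤ T (cind U hU) y}).Nonempty := by
      rw [Set.nonempty_iff_ne_empty]
      exact fun h => hinf (finite_of_derived_empty h)
    obtain ⟨y, hy⟩ := hne
    refine ⟨y, ?_, ?_⟩
    · rw [cb_succ]
      exact derivedSet_mono _ _ (fun z hz => hz.1) hy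
    · exact ((isClosed_iff_derivedSet_subset _).1 (hcl o U hU) hy).2
  | h2 o ho ih =>
    intro x hx
    apply hcpt
    intro U hU hxU
    let I := {b : Ordinal.{0} // b < o}
    have : Nonempty I := ⟨⟨0, ho.bot_lt⟩⟩
    obtain ⟨y, hy⟩ := IsCompact.nonempty_iInter_of_directed_nonempty_isCompact_isClosed
      (fun b : I => {y | y ∈ cbDeriv L b.1 ∧ c ≤ T (cind U hU) y}) (by
        intro b b'
        refine ⟨⟨max b.1 b'.1, max_lt b.2 b'.2⟩, ?_, ?_⟩
        · exact fun y hy => ⟨cb_anti L (le_max_left _ _) hy.1, hy.2⟩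
        · exact fun y hy => ⟨cb_anti L (le_max_right _ _) hy.1, hy.2⟩)
      (fun b => by
        obtain ⟨y, h1, h2⟩ := ih b.1 b.2 x ((mem_cb_limit ho).1 hx b.1 b.2)
        exact ⟨y, h1, h2 U hU hxU⟩)
      (fun b => (hcl _ _ _).isCompact) (fun b => hcl _ _ _)
    rw [mem_iInter] at hy
    exact ⟨y, (mem_cb_limit ho).2 fun b hb => (hy ⟨b, hb⟩).1, (hy ⟨0, ho.bot_lt⟩).2⟩

theorem exists_lower {E F : Type*} [NormedAddCommGroup E] [NormedSpace ℝ E] [NormedAddCommGroup F]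
    [NormedSpace ℝ F] (T : E ≃L[ℝ] F) : ∃ c : ℝ, 0 < c ∧ ∀ f, c * ‖f‖ ≤ ‖T f‖ := by
  obtain ⟨C, hC, h⟩ := (T.symm : F →L[ℝ] E).bound
  refine ⟨C⁻¹, inv_pos.2 hC, fun f => ?_⟩
  have := h (T f)
  rw [inv_mul_le_iff₀ hC]
  simpa using this

theorem height_le_of_pos {K L : Type*} [TopologicalSpace K] [CompactSpace K] [T2Space K]
    [Countable K] [TopologicalSpace L] [CompactSpace L] [T2Space L] [Countable L]
    (T : C(K, ℝ) ≃L[ℝ] C(L, ℝ)) (hT : ∀ f : C(K, ℝ), 0 ≤ f → 0 ≤ T f) :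
    cbHeight K ≤ cbHeight L := by
  obtain ⟨c, hc, hcT⟩ := exists_lower T
  have h1 : cbDeriv L (cbHeight L) = ∅ := csInf_mem (exists_cb_empty L)
  refine csInf_le' ?_
  rw [Set.mem_ofPred_eq, Set.eq_empty_iff_forall_notMem]
  intro x hx
  obtain ⟨y, hy, -⟩ := posA T hT hc hcT _ x hx
  rw [h1] at hy
  exact hy

end PartA

section PartB

universe uu vv

/-- A bounded, weak-star continuous and norm separated family of functionals on `C(K)`. -/
def SepSys {K : Type uu} [TopologicalSpace K] [CompactSpace K] {L : Type vv} [TopologicalSpace L]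
    (μ : L → C(K, ℝ) →L[ℝ] ℝ) : Prop :=
  (∀ f, Continuous fun y => μ y f) ∧ (∃ M : ℝ, ∀ y, ‖μ y‖ ≤ M) ∧
    ∃ c : ℝ, 0 < c ∧ ∀ y y', y ≠ y' → ∃ g, ‖g‖ ≤ 1 ∧ c ≤ μ y g - μ y' g

/-- The inductive statement: separated systems over `K` cannot have larger `ω ^ γ` derivative. -/
def SProp (γ : Ordinal.{0}) : Prop :=
  ∀ (K : Type uu) [TopologicalSpace K] [CompactSpace K] [T2Space K] [Countable K],
    cbDeriv K (ω ^ γ) = ∅ → ∀ (L : Type vv) [TopologicalSpace L] [T2Space L]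
      (μ : L → C(K, ℝ) →L[ℝ] ℝ), SepSys μ → cbDeriv L (ω ^ γ) = ∅

open Classical in
/-- Extension by zero of a function on a clopen set. -/
noncomputable def extFun {K : Type uu} [TopologicalSpace K] {P : Set K} (hP : IsClopen P)
    (f : C(P, ℝ)) : C(K, ℝ) :=
  ⟨fun x => if h : x ∈ P then f ⟨x, h⟩ else 0, by
    rw [continuous_iff_continuousAt]
    intro x
    by_cases hx : x ∈ P
    · have := (hP.isOpen.isOpenEmbedding_subtypeVal.continuousAt_iff
        (g := fun x => if h : x ∈ P then f ⟨x, h⟩ else 0) (x := ⟨x, hx⟩)).1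
      apply this
      have h2 : (fun x : K => if h : x ∈ P then f ⟨x, h⟩ else 0) ∘ (Subtype.val : P → K) = f := by
        funext z
        simp
      rw [h2]
      exact f.continuous.continuousAt
    · have : (fun _ => 0) =ᶠ[𝓝 x] fun x => if h : x ∈ P then f ⟨x, h⟩ else 0 := by
        filter_upwards [hP.compl.isOpen.mem_nhds hx] with z hz
        rw [dif_neg hz]
      exact continuousAt_const.congr this⟩

theorem extFun_mem {K : Type uu} [TopologicalSpace K] {P : Set K} (hP : IsClopen P)
    (f : C(P, ℝ)) {x : K} (hx : x ∈ P) : extFun hP f x = f ⟨x, hx⟩ := by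
  simp [extFun, hx]

theorem extFun_not_mem {K : Type uu} [TopologicalSpace K] {P : Set K} (hP : IsClopen P)
    (f : C(P, ℝ)) {x : K} (hx : x ∉ P) : extFun hP f x = 0 := by
  simp [extFun, hx]

theorem exists_ext {K : Type uu} [TopologicalSpace K] [CompactSpace K] {P : Set K}
    [CompactSpace P] (hP : IsClopen P) : ∃ E : C(P, ℝ) →L[ℝ] C(K, ℝ), (∀ f, ‖E f‖ ≤ ‖f‖) ∧
      (∀ f x (h : x ∈ P), E f x = f ⟨x, h⟩) ∧ ∀ f x, x ∉ P → E f x = 0 := by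
  have hn : ∀ f, ‖extFun hP f‖ ≤ ‖f‖ := by
    intro f
    rw [ContinuousMap.norm_le _ (norm_nonneg _)]
    intro x
    by_cases hx : x ∈ P
    · rw [extFun_mem hP f hx]; exact f.norm_coe_le_norm _
    · rw [extFun_not_mem hP f hx]; simp
  refine ⟨LinearMap.mkContinuous
    { toFun := extFun hP
      map_add' := ?_
      map_smul' := ?_ } 1 ?_, ?_, ?_, ?_⟩
  · intro f g
    ext x
    by_cases hx : x ∈ P
    · simp [extFun_mem hP _ hx]
    · simp [extFun_not_mem hP _ hx]
  · intro r f
    ext x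
    by_cases hx : x ∈ P
    · simp [extFun_mem hP _ hx]
    · simp [extFun_not_mem hP _ hx]
  · intro f; simpa using hn f
  · exact hn
  · intro f x h; exact extFun_mem hP f h
  · intro f x h; exact extFun_not_mem hP f h

theorem drop_step {δ e : Ordinal.{0}} (IH : SProp.{uu, vv} δ) {W : Type uu} [TopologicalSpace W]
    [CompactSpace W] [T2Space W] [Countable W] {s : W} (hs : cbDeriv W (ω ^ δ) = {s})
    {L : Type vv} [TopologicalSpace L] [T2Space L] (μ : L → C(W, ℝ) →L[ℝ] ℝ)
    (hcont : ∀ f, Continuous fun y => μ y f) {M : ℝ} (hM : ∀ y, ‖μ y‖ ≤ M) {c : ℝ} (hc : 0 < c)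
    (hsep : ∀ y y', y ≠ y' → ∃ g, ‖g‖ ≤ 1 ∧ c ≤ μ y g - μ y' g) {N : ℝ}
    (hN : ∀ y ∈ cbDeriv L e, ∀ f, f s = 0 → ‖f‖ ≤ 1 → μ y f ≤ N) :
    ∀ y ∈ cbDeriv L (e + ω ^ δ), ∀ f, f s = 0 → ‖f‖ ≤ 1 → μ y f ≤ N - c / 12 := by
  intro y hy f hfs hf
  by_contra hcon
  push Not at hcon
  -- approximate
  obtain ⟨ε, hε, hεlt⟩ : ∃ ε : ℝ, 0 < ε ∧ ‖μ y‖ * ε < μ y f - (N - c / 12) := by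
    refine ⟨(μ y f - (N - c / 12)) / (2 * (‖μ y‖ + 1)), ?_, ?_⟩
    · have := norm_nonneg (μ y)
      have h0 : 0 < μ y f - (N - c / 12) := by linarith
      positivity
    · have h1 := norm_nonneg (μ y)
      have h0 : 0 < μ y f - (N - c / 12) := by linarith
      rw [← mul_div_assoc, div_lt_iff₀ (by positivity)]
      nlinarith
  obtain ⟨Z, hZ, hsZ, hZs⟩ := clopen_nhd (x := s) (U := {x | |f x| < ε})
    ((isOpen_lt (by fun_prop) continuous_const).mem_nhds (by
      change |f s| < ε
      rw [hfs]; simpa using hε))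
  obtain ⟨P, hP, rfl⟩ : ∃ P : Set W, IsClopen P ∧ Z = Pᶜ := ⟨Zᶜ, hZ.compl, (compl_compl _).symm⟩
  set f' : C(W, ℝ) := f * cind P hP with hf'
  have hf'off : ∀ x, x ∉ P → f' x = 0 := by
    intro x hx; simp [hf', cind_of_not_mem hP hx]
  have hf'on : ∀ x, x ∈ P → f' x = f x := by
    intro x hx; simp [hf', cind_of_mem hP hx]
  have hf'1 : ∀ x, |f' x| ≤ 1 := by
    intro x
    by_cases hx : x ∈ P
    · rw [hf'on x hx]; exact (f.norm_coe_le_norm x).trans hf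
    · rw [hf'off x hx]; simp
  have hdiff : ‖f - f'‖ ≤ ε := by
    rw [ContinuousMap.norm_le _ hε.le]
    intro x
    by_cases hx : x ∈ P
    · simp [hf'on x hx, hε.le]
    · simp only [ContinuousMap.sub_apply, hf'off x hx, _root_.sub_zero]
      exact le_of_lt (hZs hx)
  have hyf' : N - c / 12 < μ y f' := by
    have h1 := (μ y).le_opNorm (f - f')
    have h2 : ‖μ y‖ * ‖f - f'‖ ≤ ‖μ y‖ * ε := by gcongr
    have h3 := le_abs_self (μ y (f - f'))
    rw [Real.norm_eq_abs] at h1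
    rw [map_sub] at *
    linarith
  have hye : y ∈ cbDeriv L e := cb_anti L le_self_add hy
  set V : Set (cbDeriv L e) := {u | N - c / 12 < μ u.1 f' ∧ |μ u.1 1 - μ y 1| < c / 12} with hV
  have hVo : IsOpen V := by
    have h1 := (hcont f').comp (continuous_subtype_val (p := fun u => u ∈ cbDeriv L e))
    have h2 := (hcont 1).comp (continuous_subtype_val (p := fun u => u ∈ cbDeriv L e))
    exact (isOpen_lt continuous_const h1).inter
      (isOpen_lt (h2.sub continuous_const).abs continuous_const)
  have hyV : (⟨y, hye⟩ : cbDeriv L e) ∈ V := by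
    refine ⟨hyf', ?_⟩
    simpa using hc
  have : CompactSpace P := isCompact_iff_compactSpace.1 hP.isClosed.isCompact
  obtain ⟨E, hE1, hE2, hE3⟩ := exists_ext hP
  have hPe : cbDeriv P (ω ^ δ) = ∅ := by
    rw [Set.eq_empty_iff_forall_notMem]
    intro u hu
    have := (cb_openEmb hP.isOpen.isOpenEmbedding_subtypeVal _ u).1 hu
    rw [hs] at this
    rw [mem_singleton_iff] at this
    exact hsZ (this ▸ u.2)
  -- functionals are small off `P`
  have hsmall : ∀ v ∈ V, ∀ h : C(W, ℝ), (∀ x ∈ P, h x = 0) → h s = 0 → ‖h‖ ≤ 1 →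
      μ v.1 h ≤ c / 12 := by
    intro v hv h hP0 hs0 hh
    have h1 := hN v.1 v.2 (f' + h) (by
      rw [ContinuousMap.add_apply, hf'off s hsZ, hs0, add_zero]) (by
      rw [ContinuousMap.norm_le _ zero_le_one]
      intro x
      rw [ContinuousMap.add_apply]
      by_cases hx : x ∈ P
      · rw [hP0 x hx, add_zero]; exact hf'1 x
      · rw [hf'off x hx, zero_add]; exact (h.norm_coe_le_norm x).trans hh)
    rw [map_add] at h1
    have := hv.1
    linarith
  have hres : SepSys (fun v : V => (μ v.1.1).comp E) := by
    refine ⟨?_, ⟨M, ?_⟩, c / 4, by positivity, ?_⟩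
    · intro k
      exact (hcont (E k)).comp (continuous_subtype_val.comp continuous_subtype_val)
    · intro v
      refine ContinuousLinearMap.opNorm_le_bound _ ((norm_nonneg (μ y)).trans (hM y)) fun k => ?_
      refine ((μ v.1.1).le_opNorm _).trans ?_
      exact mul_le_mul (hM _) (hE1 k) (norm_nonneg _) ((norm_nonneg (μ y)).trans (hM y))
    · intro v v' hne
      obtain ⟨g, hg, hcg⟩ := hsep v.1.1 v'.1.1 (fun h => hne (Subtype.ext (Subtype.ext h)))
      have hgx : ∀ x, |g x| ≤ 1 := fun x => (g.norm_coe_le_norm x).trans hg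
      set k0 : C(W, ℝ) := (1 / 2 : ℝ) • (g - (g s) • (1 : C(W, ℝ))) with hk0
      have hk0x : ∀ x, k0 x = (1 / 2) * (g x - g s) := by intro x; simp [hk0]
      have hk0n : ∀ x, |k0 x| ≤ 1 := by
        intro x
        rw [hk0x, abs_le]
        have h1 := abs_le.1 (hgx x)
        have h2 := abs_le.1 (hgx s)
        constructor <;> linarith [h1.1, h1.2, h2.1, h2.2]
      set h : C(W, ℝ) := k0 * cind Pᶜ hP.compl with hh
      have hon : ∀ x ∈ P, h x = 0 := by
        intro x hx
        have : x ∉ Pᶜ := fun h => h hx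
        simp [hh, cind_of_not_mem hP.compl this]
      have hoff : ∀ x, x ∉ P → h x = k0 x := by
        intro x hx
        have : x ∈ Pᶜ := hx
        simp [hh, cind_of_mem hP.compl this]
      have hhs : h s = 0 := by rw [hoff s hsZ, hk0x]; simp
      have hh1 : ‖h‖ ≤ 1 := by
        rw [ContinuousMap.norm_le _ zero_le_one]
        intro x
        by_cases hx : x ∈ P
        · rw [hon x hx]; simp
        · rw [hoff x hx]; exact hk0n x
      refine ⟨k0.restrict P, ?_, ?_⟩
      · rw [ContinuousMap.norm_le _ zero_le_one]
        intro x
        exact hk0n x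
      · have hdec : g = (g s) • (1 : C(W, ℝ)) + (2 : ℝ) • E (k0.restrict P) + (2 : ℝ) • h := by
          ext x
          by_cases hx : x ∈ P
          · simp [hE2 _ x hx, hon x hx, hk0x]
          · simp [hE3 _ x hx, hoff x hx, hk0x]
        have a1 := hsmall v.1 v.2 h hon hhs hh1
        have a2 := hsmall v'.1 v'.2 (-h) (fun x hx => by simp [hon x hx]) (by simp [hhs])
          (by rwa [norm_neg])
        rw [map_neg] at a2
        have b1 := abs_lt.1 v.2.2
        have b2 := abs_lt.1 v'.2.2
        have d1 : g s * (μ v.1.1 1 - μ v'.1.1 1) ≤ 2 * (c / 12) := by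
          have e1 : |g s * (μ v.1.1 1 - μ v'.1.1 1)| ≤ 1 * (2 * (c / 12)) := by
            rw [abs_mul]
            refine mul_le_mul (hgx s) ?_ (abs_nonneg _) zero_le_one
            rw [abs_le]
            constructor <;> linarith [b1.1, b1.2, b2.1, b2.2]
          linarith [le_abs_self (g s * (μ v.1.1 1 - μ v'.1.1 1))]
        have e2 : ∀ w : L, μ w g = g s * μ w 1 + 2 * μ w (E (k0.restrict P)) + 2 * μ w h := by
          intro w
          conv_lhs => rw [hdec]
          simp
        rw [e2 v.1.1, e2 v'.1.1] at hcg
        change c / 4 ≤ μ v.1.1 (E (k0.restrict P)) - μ v'.1.1 (E (k0.restrict P))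
        nlinarith
  have hVe := IH P hPe V _ hres
  have h1 : (⟨y, hye⟩ : cbDeriv L e) ∈ cbDeriv (cbDeriv L e) (ω ^ δ) := (cb_sub _ _).2 hy
  have h2 := (cb_openEmb hVo.isOpenEmbedding_subtypeVal (ω ^ δ) ⟨_, hyV⟩).2 h1
  rw [hVe] at h2
  exact h2

theorem sprop_zero : SProp.{uu, vv} 0 := by
  intro K _ _ _ _ hK L _ _ μ hμ
  obtain ⟨hcont, -, c, hc, hsep⟩ := hμ
  rw [opow_zero] at *
  have hK' : derivedSet (Set.univ : Set K) = ∅ := by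
    rw [← cb_zero, ← cb_succ, zero_add]; exact hK
  have : Finite K := Set.finite_univ_iff.1 (finite_of_derived_empty hK')
  have : Fintype K := Fintype.ofFinite K
  have hd : ∀ x : K, IsClopen ({x} : Set K) := fun x => isClopen_discrete _
  rw [← zero_add (1 : Ordinal), cb_succ, cb_zero, Set.eq_empty_iff_forall_notMem]
  intro y hy
  rw [mem_derivedSet, accPt_iff_nhds] at hy
  set ε : ℝ := c / (Fintype.card K + 1) with hε
  have hεp : 0 < ε := by positivity
  obtain ⟨y', ⟨hy', -⟩, hne⟩ := hy {y' | ∀ x, |μ y' (cind {x} (hd x)) - μ y (cind {x} (hd x))| < ε} (by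
    refine IsOpen.mem_nhds ?_ ?_
    · have : {y' | ∀ x, |μ y' (cind {x} (hd x)) - μ y (cind {x} (hd x))| < ε} =
          ⋂ x, {y' | |μ y' (cind {x} (hd x)) - μ y (cind {x} (hd x))| < ε} := by
        ext; simp
      rw [this]
      exact isOpen_iInter_of_finite fun x =>
        isOpen_lt ((hcont _).sub continuous_const).abs continuous_const
    · intro x; simpa using hεp)
  obtain ⟨g, hg, hcg⟩ := hsep y' y hne
  have hdec : g = ∑ x, g x • cind {x} (hd x) := by
    ext z
    rw [ContinuousMap.sum_apply, Finset.sum_eq_single z]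
    · simp [cind_of_mem (hd z) (mem_singleton z)]
    · intro w _ hw
      have : z ∉ ({w} : Set K) := fun h => hw h.symm
      simp [cind_of_not_mem (hd w) this]
    · simp
  have e : μ y' g - μ y g =
      ∑ x, g x * (μ y' (cind {x} (hd x)) - μ y (cind {x} (hd x))) := by
    conv_lhs => rw [hdec]
    simp only [map_sum, map_smul, _root_.smul_eq_mul, _root_.mul_sub, Finset.sum_sub_distrib]
  have h2 : μ y' g - μ y g ≤ ∑ x : K, ε := by
    rw [e]
    refine Finset.sum_le_sum fun x _ => ?_
    refine (le_abs_self _).trans ?_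
    rw [abs_mul]
    have h3 : |g x| ≤ 1 := (g.norm_coe_le_norm x).trans hg
    have h4 := (hy' x).le
    calc _ ≤ 1 * ε := mul_le_mul h3 h4 (abs_nonneg _) zero_le_one
      _ = ε := one_mul _
  rw [Finset.sum_const, Finset.card_univ, _root_.nsmul_eq_mul] at h2
  have h3 : ε * (Fintype.card K + 1) = c := by
    rw [hε]; field_simp
  nlinarith

theorem sprop (γ : Ordinal.{0}) : SProp.{uu, vv} γ := by
  induction γ using ord_ind with
  | h0 => exact sprop_zero
  | h2 γ hγ ih =>
    intro K _ _ _ _ hK L _ _ μ hμ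
    obtain ⟨b, hb, hbe⟩ := cb_limit_empty (isSuccLimit_opow one_lt_omega0 hγ) hK
    obtain ⟨γ', hγ', hb'⟩ := (lt_opow_of_isSuccLimit omega0_ne_zero hγ).1 hb
    have h1 : cbDeriv K (ω ^ γ') = ∅ := by
      rw [← Set.subset_empty_iff, ← hbe]; exact cb_anti K hb'.le
    have h2 := ih γ' hγ' K h1 L μ hμ
    rw [← Set.subset_empty_iff, ← h2]
    exact cb_anti L (opow_le_opow_right omega0_pos hγ'.le)
  | h1 δ ih =>
    intro K _ _ _ _ hK L _ _ μ hμ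
    have hle : ω ^ δ ≤ ω ^ (δ + 1) := opow_le_opow_right omega0_pos le_self_add
    by_cases hKe : cbDeriv K (ω ^ δ) = ∅
    · have h2 := ih K hKe L μ hμ
      rw [← Set.subset_empty_iff, ← h2]
      exact cb_anti L hle
    obtain ⟨x, hx⟩ := Set.nonempty_iff_ne_empty.2 hKe
    have : Nonempty K := ⟨x⟩
    obtain ⟨b, hb1, hb2, hb3, -⟩ := exists_top (X := K)
    have hlb : ω ^ δ ≤ b := by
      by_contra hcon
      have := cb_anti K (Order.add_one_le_iff.2 (not_le.1 hcon)) hx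
      rw [hb3] at this
      exact this
    have hbl : b < ω ^ δ * ω := by
      by_contra hcon
      obtain ⟨z, hz⟩ := hb1
      rw [not_lt, ← opow_add_one] at hcon
      have := cb_anti K hcon hz
      rw [hK] at this
      exact this
    obtain ⟨W, _, _, _, _, s, hs, T, -⟩ := exists_model_from
      (Order.one_le_iff_pos.2 (opow_pos δ omega0_pos)) b K hlb hbl hb1 hb2
    obtain ⟨hcont, ⟨M, hM⟩, c, hc, hsep⟩ := hμ
    obtain ⟨c', hc', hT⟩ := exists_lower T
    set ν : L → C(W, ℝ) →L[ℝ] ℝ := fun y => (μ y).comp (T : C(W, ℝ) →L[ℝ] C(K, ℝ)) with hν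
    have hcontν : ∀ f, Continuous fun y => ν y f := fun f => hcont (T f)
    have hMν : ∀ y, ‖ν y‖ ≤ M * ‖(T : C(W, ℝ) →L[ℝ] C(K, ℝ))‖ := fun y =>
      (ContinuousLinearMap.opNorm_comp_le _ _).trans
        (mul_le_mul_of_nonneg_right (hM y) (norm_nonneg _))
    have hsepν : ∀ y y', y ≠ y' → ∃ g, ‖g‖ ≤ 1 ∧ c' * c ≤ ν y g - ν y' g := by
      intro y y' hne
      obtain ⟨g, hg, hcg⟩ := hsep y y' hne
      refine ⟨c' • T.symm g, ?_, ?_⟩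
      · have := hT (T.symm g)
        rw [T.apply_symm_apply] at this
        rw [norm_smul, Real.norm_of_nonneg hc'.le]
        exact this.trans hg
      · have e : ∀ y, ν y (c' • T.symm g) = c' * μ y g := by
          intro y; simp [hν]
        rw [e, e, ← _root_.mul_sub]
        exact mul_le_mul_of_nonneg_left hcg hc'.le
    have hcc : 0 < c' * c := mul_pos hc' hc
    set M' := M * ‖(T : C(W, ℝ) →L[ℝ] C(K, ℝ))‖
    have key : ∀ n : ℕ, ∀ y ∈ cbDeriv L (ω ^ δ * n), ∀ f, f s = 0 → ‖f‖ ≤ 1 →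
        ν y f ≤ M' - n * (c' * c / 12) := by
      intro n
      induction n with
      | zero =>
        intro y _ f _ hf
        have h1 := (le_abs_self _).trans ((ν y).le_opNorm f)
        have h2 : ‖ν y‖ * ‖f‖ ≤ M' * 1 :=
          mul_le_mul (hMν y) hf (norm_nonneg _) ((norm_nonneg (ν y)).trans (hMν y))
        simp only [Nat.cast_zero, zero_mul, _root_.sub_zero]
        linarith
      | succ n ihn =>
        intro y hy f hfs hf
        rw [Nat.cast_succ, mul_add_one] at hy
        have := drop_step ih hs ν hcontν hMν hcc hsepν ihn y hy f hfs hf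
        push_cast
        linarith
    obtain ⟨n, hn⟩ := exists_nat_gt (M' / (c' * c / 12))
    rw [div_lt_iff₀ (by positivity)] at hn
    have hne : cbDeriv L (ω ^ δ * n) = ∅ := by
      rw [Set.eq_empty_iff_forall_notMem]
      intro y hy
      have := key n y hy 0 rfl (by simp)
      rw [map_zero] at this
      linarith
    rw [← Set.subset_empty_iff, ← hne, opow_add_one]
    exact cb_anti L (mul_le_mul_right (natCast_lt_omega0 n).le _)

end PartB

section Final

universe uu vv

theorem homeo_posIso {X : Type uu} {Y : Type vv} [TopologicalSpace X] [TopologicalSpace Y]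
    [CompactSpace X] [CompactSpace Y] (e : X ≃ₜ Y) :
    ∃ T : C(X, ℝ) ≃L[ℝ] C(Y, ℝ), ∀ f, 0 ≤ f → 0 ≤ T f := by
  refine ⟨{ toFun := fun f => f.comp ⟨e.symm, e.symm.continuous⟩
            invFun := fun f => f.comp ⟨e, e.continuous⟩
            map_add' := fun f g => rfl
            map_smul' := fun r f => rfl
            left_inv := fun f => by ext x; simp
            right_inv := fun f => by ext x; simp
            continuous_toFun := ContinuousMap.continuous_precomp _
            continuous_invFun := ContinuousMap.continuous_precomp _ }, ?_⟩
  intro f hf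
  exact ContinuousMap.le_def.2 fun y => ContinuousMap.le_def.1 hf (e.symm y)

theorem top_ge_one {K : Type*} [TopologicalSpace K] [CompactSpace K] [T2Space K]
    [Countable K] [Infinite K] {a : Ordinal.{0}} (h : (cbDeriv K a).Finite) : 1 ≤ a := by
  rw [Order.one_le_iff_pos]
  by_contra hc
  rw [nonpos_iff_eq_zero.1 (not_lt.1 hc), cb_zero] at h
  exact Set.infinite_univ h

theorem gamma_spec (a : Ordinal.{0}) : ∃ γ : Ordinal.{0}, GammaOrd a = ω ^ γ ∧ a ≤ ω ^ γ := by
  have h : ({x : Ordinal | (∃ β : Ordinal, x = ω ^ β) ∧ a ≤ x}).Nonempty :=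
    ⟨ω ^ a, ⟨a, rfl⟩, right_le_opow a one_lt_omega0⟩
  obtain ⟨⟨γ, h1⟩, h2⟩ := csInf_mem h
  exact ⟨γ, h1, h1 ▸ h2⟩

theorem two_three {K : Type uu} {L : Type vv} [TopologicalSpace K] [CompactSpace K] [T2Space K]
    [Countable K] [Infinite K] [TopologicalSpace L] [CompactSpace L] [T2Space L]
    [Countable L] [Infinite L] (T : C(K, ℝ) ≃L[ℝ] C(L, ℝ)) :
    cbHeight L < GammaOrd (cbHeight K) := by
  obtain ⟨γ, hγ, hle⟩ := gamma_spec (cbHeight K)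
  obtain ⟨a, -, ha, -, hh⟩ := exists_top (X := K)
  have ha1 := top_ge_one ha
  have hγ0 : γ ≠ 0 := by
    rintro rfl
    rw [opow_zero, hh] at hle
    have := (Order.add_one_le_iff.1 hle)
    exact absurd ha1 (not_le.2 this)
  have hlim : Order.IsSuccLimit (ω ^ γ) := isSuccLimit_opow_left isSuccLimit_omega0 hγ0
  have hK0 : cbDeriv K (cbHeight K) = ∅ := csInf_mem (exists_cb_empty K)
  have hK : cbDeriv K (ω ^ γ) = ∅ := by
    rw [← Set.subset_empty_iff, ← hK0]; exact cb_anti K hle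
  obtain ⟨c, hc, hT⟩ := exists_lower T
  have hL := sprop γ K hK L
    (fun y => (ContinuousMap.evalCLM ℝ y).comp (T : C(K, ℝ) →L[ℝ] C(L, ℝ))) (by
      refine ⟨fun f => (T f).continuous, ⟨‖(T : C(K, ℝ) →L[ℝ] C(L, ℝ))‖, fun y => ?_⟩, c, hc, ?_⟩
      · refine ContinuousLinearMap.opNorm_le_bound _ (norm_nonneg (T : C(K, ℝ) →L[ℝ] C(L, ℝ))) fun f => ?_
        exact ((T f).norm_coe_le_norm y).trans ((T : C(K, ℝ) →L[ℝ] C(L, ℝ)).le_opNorm f)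
      · intro y y' hne
        obtain ⟨V, hV, hyV, hV'⟩ := clopen_nhd (isOpen_compl_singleton.mem_nhds (x := y) hne)
        have hy'V : y' ∉ V := fun h => hV' h rfl
        refine ⟨c • T.symm (cind V hV), ?_, ?_⟩
        · have := hT (T.symm (cind V hV))
          rw [T.apply_symm_apply] at this
          rw [norm_smul, Real.norm_of_nonneg hc.le]
          refine this.trans ?_
          rw [ContinuousMap.norm_le _ zero_le_one]
          intro x
          by_cases hx : x ∈ V
          · rw [cind_of_mem hV hx]; simp
          · rw [cind_of_not_mem hV hx]; simp
        · simp [cind_of_mem hV hyV, cind_of_not_mem hV hy'V])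
  obtain ⟨b, hb, hbe⟩ := cb_limit_empty hlim hL
  rw [hγ]
  exact lt_of_le_of_lt (csInf_le' hbe) hb

theorem three_one {K : Type uu} {L : Type vv} [TopologicalSpace K] [CompactSpace K] [T2Space K]
    [Countable K] [Infinite K] [TopologicalSpace L] [CompactSpace L] [T2Space L]
    [Countable L] [Infinite L] (h1 : cbHeight K ≤ cbHeight L)
    (h2 : cbHeight L < GammaOrd (cbHeight K)) :
    ∃ T : C(K, ℝ) ≃L[ℝ] C(L, ℝ), ∀ f : C(K, ℝ), 0 ≤ f → 0 ≤ T f := by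
  obtain ⟨a, ha0, ha, -, hha⟩ := exists_top (X := K)
  obtain ⟨b, hb0, hb, -, hhb⟩ := exists_top (X := L)
  have ha1 := top_ge_one ha
  rw [hha, hhb] at h1
  rw [hha, hhb] at h2
  have hab : a ≤ b := Order.lt_add_one_iff.1 (Order.add_one_le_iff.1 h1)
  have hane : a ≠ 0 := (Order.one_le_iff_pos.1 ha1).ne'
  have hlt : b < a * ω := by
    have e1 : GammaOrd (a + 1) ≤ ω ^ (log ω a + 1) := by
      refine csInf_le' ⟨⟨_, rfl⟩, ?_⟩
      exact Order.add_one_le_iff.2 (lt_opow_of_log_lt one_lt_omega0 (Order.lt_add_one_iff.2 le_rfl))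
    have e2 : ω ^ (log ω a + 1) ≤ a * ω := by
      rw [opow_add_one]
      exact mul_le_mul_left (opow_log_le_self ω hane) ω
    exact ((Order.lt_add_one_iff.2 le_rfl).trans h2).trans_le (e1.trans e2)
  obtain ⟨W, _, _, _, _, s, hs, T, hT⟩ := exists_model_to ha1 ha0 ha
  obtain ⟨W', _, _, _, _, s', hs', T', hT'⟩ := exists_model_from ha1 b L hab hlt hb0 hb
  obtain ⟨e⟩ := homeo_single a W W' s s' hs hs'
  obtain ⟨R, hR⟩ := homeo_posIso e
  exact ⟨(T.trans R).trans T', fun f hf => hT' _ (hR _ (hT f hf))⟩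

end Final

/-- For infinite countable compact Hausdorff spaces `K`, `L` the following are
equivalent: (i) there is a positive (surjective) isomorphism `C(K) → C(L)`;
(ii) `C(K)` is linearly isomorphic to `C(L)` and `ht(K) ≤ ht(L)`;
(iii) `ht(K) ≤ ht(L) < Γ(ht(K))`. -/
theorem stmt_1 {K L : Type*} [TopologicalSpace K] [CompactSpace K] [T2Space K]
    [Countable K] [Infinite K]
    [TopologicalSpace L] [CompactSpace L] [T2Space L]
    [Countable L] [Infinite L] :
    ((∃ T : C(K, ℝ) ≃L[ℝ] C(L, ℝ), ∀ f : C(K, ℝ), 0 ≤ f → 0 ≤ T f) ↔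
      (Nonempty (C(K, ℝ) ≃L[ℝ] C(L, ℝ)) ∧ cbHeight K ≤ cbHeight L)) ∧
    ((Nonempty (C(K, ℝ) ≃L[ℝ] C(L, ℝ)) ∧ cbHeight K ≤ cbHeight L) ↔
      (cbHeight K ≤ cbHeight L ∧ cbHeight L < GammaOrd (cbHeight K))) := by
  have h12 : (∃ T : C(K, ℝ) ≃L[ℝ] C(L, ℝ), ∀ f : C(K, ℝ), 0 ≤ f → 0 ≤ T f) →
      (Nonempty (C(K, ℝ) ≃L[ℝ] C(L, ℝ)) ∧ cbHeight K ≤ cbHeight L) :=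
    fun ⟨T, hT⟩ => ⟨⟨T⟩, height_le_of_pos T hT⟩
  have h23 : (Nonempty (C(K, ℝ) ≃L[ℝ] C(L, ℝ)) ∧ cbHeight K ≤ cbHeight L) →
      (cbHeight K ≤ cbHeight L ∧ cbHeight L < GammaOrd (cbHeight K)) :=
    fun ⟨⟨T⟩, h⟩ => ⟨h, two_three T⟩
  have h31 : (cbHeight K ≤ cbHeight L ∧ cbHeight L < GammaOrd (cbHeight K)) →
      ∃ T : C(K, ℝ) ≃L[ℝ] C(L, ℝ), ∀ f : C(K, ℝ), 0 ≤ f → 0 ≤ T f :=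
    fun ⟨h1, h2⟩ => three_one h1 h2
  exact ⟨⟨h12, fun h => h31 (h23 h)⟩, ⟨h23, fun h => h12 (h31 h)⟩⟩
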